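/- arXiv:0710.2767 — 2 statements merged into one kernel-verified Lean document; each statement's English description precedes it below -/
import Mathlib

section
/- Let m > 3 be a prime number, s = 3 and q = p ≡ 1 (mod 3). Then P_m(0,3,h) = (1/3)·(p^{p−2} − 1) if m = p, and P_m(0,3,h) = (1/(3m))·(p^{m−1} − 1) if m ≠ p. For a ≠ 0: if m = p then P_m(a,3,h) = (1/(3p))·( p^{p−1} + 2·p^{(p−1)/3}·Re(π_3^{(p−1)/3}·χ_3(a)·ζ^{2h}) ); if m ≠ p then P_m(a,3,h) = (1/(3m))·( p^{m−1} − 1 + 2·Re L_m ), where L_m = ( (p·π_3)^{(m−1)/3} − χ̄_3(m) )·χ_3(a)·ζ^{2h} if m ≡ 1 (mod 3), and L_m = ( p^{(m−2)/3}·π_3^{(m+1)/3}·χ_3(a)·ζ^h − χ̄_3(m) )·χ_3(a)·ζ^h if m ≡ 2 (mod 3). -/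
/-!
Attach to a monic polynomial `f` the weight `χ (product of roots) * ψ (sum of roots)`, for a
multiplicative character `χ` and an additive character `ψ`. Its `L`-series is `1 + g(χ, ψ) T`, with
`g` the Gauss sum, unless both characters are trivial. Comparing with the logarithmic derivative of
the Euler product (Newton's identities), the coefficient of `T ^ m` gives, for a prime `m`, the
weighted count of irreducible polynomials of degree `m` up to the contribution of the powers
`(X - c) ^ m`. Orthogonality of the additive characters isolates the polynomials with root sum `a`,
and orthogonality of the cubic characters those with constant term in a given coset of the cubes.

For `χ` of order three the Gauss sum enters through `g(χ) ^ 3 = q * J(χ, χ)`. The Jacobi sum is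
determined by `χ 4 * J(χ, χ) = ∑ y, χ (1 - y ^ 2)`: the symmetry `y ↦ -y` gives its residue modulo
`3`, its norm is `p`, and replacing `χ t` by its reduction `t ^ ((p - 1) / 3)`, whose sum over
`t = 1 - y ^ 2` vanishes, tells it apart from its conjugate.
-/

noncomputable section

open Complex Polynomial Classical

/-- `P_m(a,s,h)`: the number of monic irreducible `f = x^m − a x^{m-1} + ⋯ + (−1)^m b`
of degree `m` over `F` with `b ∈ g^h·⟨g^s⟩`. -/
def PP (F : Type*) [Field F] [Fintype F] (g : F) (m s h : ℕ) (a : F) : ℕ :=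
  Nat.card {f : Polynomial F // f.Monic ∧ f.natDegree = m ∧ Irreducible f ∧
    f.coeff (m - 1) = -a ∧ ∃ k : ℕ, (-1 : F) ^ m * f.coeff 0 = g ^ (h + s * k)}

section MonicPolynomials

/-- The bijection sending a monic polynomial of degree `n` to its `n` lower coefficients. -/
def monicEquivCoeff (F : Type*) [Field F] (n : ℕ) :
    {f : F[X] // f.Monic ∧ f.natDegree = n} ≃ (Fin n → F) :=
  (monicEquivDegreeLT n).trans (degreeLTEquiv F n).toEquiv

lemma monicEquivCoeff_apply {F : Type*} [Field F] {n : ℕ}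
    (f : {f : F[X] // f.Monic ∧ f.natDegree = n}) (i : Fin n) :
    monicEquivCoeff F n f i = f.1.coeff i :=
  eraseLead_coeff_of_ne _ (by rw [f.2.2]; exact i.2.ne)

/-- The finite set of monic polynomials of degree `n` over a finite field. -/
def monicsOfDegree (F : Type*) [Field F] [Fintype F] (n : ℕ) : Finset F[X] :=
  Finset.univ.map ((monicEquivCoeff F n).symm.toEmbedding.trans (.subtype _))

/-- The finite set of monic irreducible polynomials of degree `n` over a finite field. -/
def monicIrreduciblesOfDegree (F : Type*) [Field F] [Fintype F] (n : ℕ) : Finset F[X] :=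
  (monicsOfDegree F n).filter Irreducible

variable {F R : Type*} [Field F] [Fintype F]

lemma mem_monicsOfDegree {n : ℕ} {f : F[X]} :
    f ∈ monicsOfDegree F n ↔ f.Monic ∧ f.natDegree = n := by
  simp only [monicsOfDegree, Finset.mem_map, Finset.mem_univ, true_and]
  exact ⟨by rintro ⟨c, rfl⟩; exact ((monicEquivCoeff F n).symm c).2,
    fun h ↦ ⟨monicEquivCoeff F n ⟨f, h⟩, by simp⟩⟩

lemma mem_monicIrreduciblesOfDegree {n : ℕ} {f : F[X]} :
    f ∈ monicIrreduciblesOfDegree F n ↔ f.Monic ∧ f.natDegree = n ∧ Irreducible f := by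
  simp only [monicIrreduciblesOfDegree, Finset.mem_filter, mem_monicsOfDegree, and_assoc]

lemma monicsOfDegree_zero : monicsOfDegree F 0 = {1} := by
  ext f
  rw [mem_monicsOfDegree, Finset.mem_singleton]
  exact ⟨fun h ↦ h.1.natDegree_eq_zero.1 h.2, by rintro rfl; exact ⟨monic_one, natDegree_one⟩⟩

lemma monicIrreduciblesOfDegree_one : monicIrreduciblesOfDegree F 1 = monicsOfDegree F 1 :=
  Finset.filter_true_of_mem fun _ hf ↦
    irreducible_of_degree_eq_one (degree_eq_iff_natDegree_eq_of_pos one_pos |>.2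
      (mem_monicsOfDegree.1 hf).2)

lemma sum_monicsOfDegree_one [AddCommMonoid R] (w : F[X] → R) :
    ∑ f ∈ monicsOfDegree F 1, w f = ∑ c : F, w (X - C c) := by
  refine (Finset.sum_bij (fun c _ ↦ X - C c) (fun c _ ↦ ?_) (fun c _ d _ hcd ↦ ?_)
    (fun f hf ↦ ?_) fun _ _ ↦ rfl).symm
  · exact mem_monicsOfDegree.2 ⟨monic_X_sub_C c, natDegree_X_sub_C c⟩
  · simpa using hcd
  · obtain ⟨hf, hdeg⟩ := mem_monicsOfDegree.1 hf
    exact ⟨-f.coeff 0, Finset.mem_univ _, by simp [← hf.eq_X_add_C hdeg]⟩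

lemma sum_monicsOfDegree_coeff_mul_coeff [CommSemiring R] (n : ℕ) (u v : F → R) :
    ∑ f ∈ monicsOfDegree F (n + 2), u (f.coeff 0) * v (f.coeff (n + 1)) =
      (∑ x, u x) * (∑ x, v x) * (Fintype.card F : R) ^ n := by
  let w : Fin (n + 2) → F → R := Fin.cons u (Fin.snoc (fun _ _ ↦ 1) v)
  have coeff_symm (c : Fin (n + 2) → F) (i : Fin (n + 2)) :
      ((monicEquivCoeff F (n + 2)).symm c).1.coeff i = c i := by
    rw [← monicEquivCoeff_apply, Equiv.apply_symm_apply]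
  calc ∑ f ∈ monicsOfDegree F (n + 2), u (f.coeff 0) * v (f.coeff (n + 1))
      = ∑ c : Fin (n + 2) → F, u (c 0) * v (c (Fin.last (n + 1))) := by
        simp [monicsOfDegree, ← coeff_symm]
    _ = ∑ c : Fin (n + 2) → F, ∏ i, w i (c i) := by
        simp [w, Fin.prod_univ_succ (n := n + 1), Fin.prod_univ_castSucc (n := n)]
    _ = ∏ i, ∑ x, w i x := by rw [Fintype.prod_sum]
    _ = (∑ x, u x) * (∑ x, v x) * (Fintype.card F : R) ^ n := by
        simp [w, Fin.prod_univ_succ (n := n + 1), Fin.prod_univ_castSucc (n := n)]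
        ring

end MonicPolynomials

section NewtonIdentities

lemma sum_Ioc_sum_divisorsAntidiagonal {M : Type*} [AddCommMonoid M] (N : ℕ) (φ : ℕ × ℕ → M) :
    ∑ j ∈ Finset.Ioc 0 N, ∑ x ∈ j.divisorsAntidiagonal, φ x =
      ∑ x ∈ Finset.Ioc 0 N ×ˢ Finset.Ioc 0 N with x.1 * x.2 ≤ N, φ x := by
  rw [← Finset.sum_fiberwise_of_maps_to (s := {x ∈ _ ×ˢ _ | _}) (t := Finset.Ioc 0 N)
    (g := fun x ↦ x.1 * x.2)]
  · refine Finset.sum_congr rfl fun j hj ↦ Finset.sum_congr ?_ fun _ _ ↦ rfl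
    rw [Nat.divisorsAntidiagonal_eq_prod_filter_of_le (by grind) (Finset.mem_Ioc.1 hj).2]
    ext; grind
  · simp only [Finset.mem_filter, Finset.mem_product, Finset.mem_Ioc]
    exact fun x hx ↦ ⟨Nat.mul_pos hx.1.1.1 hx.1.2.1, hx.2⟩

section UniqueFactorization

open UniqueFactorizationMonoid

lemma pow_dvd_iff_le_count_normalizedFactors {F : Type*} [Field F] {f P : F[X]} (hf : f ≠ 0)
    (hP : P.Monic) (hirr : Irreducible P) (k : ℕ) :
    P ^ k ∣ f ↔ k ≤ (normalizedFactors f).count P := by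
  rw [pow_dvd_iff_le_emultiplicity, emultiplicity_eq_count_normalizedFactors hirr hf,
    hP.normalize_eq_self, Nat.cast_le]

variable {F : Type*} [Field F] [Fintype F]

lemma natDegree_eq_sum_mul_count {n : ℕ} {f : F[X]} (hf : f ∈ monicsOfDegree F n) :
    n = ∑ d ∈ Finset.Ioc 0 n, ∑ P ∈ monicIrreduciblesOfDegree F d,
      d * (normalizedFactors f).count P := by
  obtain ⟨hmonic, hdeg⟩ := mem_monicsOfDegree.1 hf
  have irr {P} (hP : P ∈ normalizedFactors f) : Irreducible P :=
    irreducible_of_normalized_factor P hP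
  have monic {P} (hP : P ∈ normalizedFactors f) : P.Monic :=
    normalize_normalized_factor P hP ▸ monic_normalize (irr hP).ne_zero
  have natDegree_le {P} (hP : P ∈ normalizedFactors f) : P.natDegree ≤ n :=
    hdeg ▸ natDegree_le_of_dvd (dvd_of_mem_normalizedFactors hP) hmonic.ne_zero
  calc n = (normalizedFactors f).prod.natDegree := by
        rw [prod_normalizedFactors_eq hmonic.ne_zero, hmonic.normalize_eq_self, hdeg]
    _ = ∑ P ∈ (normalizedFactors f).toFinset, (normalizedFactors f).count P * P.natDegree := by
        rw [natDegree_multiset_prod_of_monic _ fun P ↦ monic, Finset.sum_multiset_map_count]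
        rfl
    _ = ∑ d ∈ Finset.Ioc 0 n, ∑ P ∈ (normalizedFactors f).toFinset with P.natDegree = d,
          (normalizedFactors f).count P * P.natDegree := by
        refine (Finset.sum_fiberwise_of_maps_to (fun P hP ↦ ?_) _).symm
        rw [Multiset.mem_toFinset] at hP
        exact Finset.mem_Ioc.2 ⟨(irr hP).natDegree_pos, natDegree_le hP⟩
    _ = _ := by
        refine Finset.sum_congr rfl fun d _ ↦ ?_
        refine (Finset.sum_congr rfl fun P hP ↦ ?_).trans
          (Finset.sum_subset (fun P hP ↦ ?_) fun P hP hPf ↦ ?_)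
        · rw [(Finset.mem_filter.1 hP).2, mul_comm]
        · rw [Finset.mem_filter, Multiset.mem_toFinset] at hP
          exact mem_monicIrreduciblesOfDegree.2 ⟨monic hP.1, hP.2, irr hP.1⟩
        · rw [Finset.mem_filter, Multiset.mem_toFinset, not_and'] at hPf
          rw [Multiset.count_eq_zero_of_notMem
            (hPf (mem_monicIrreduciblesOfDegree.1 hP).2.1), mul_zero]

/-- Each `P` of degree `d` dividing `f` exactly `c` times contributes `d` once for every
`k = 1, …, c`; the pair `(d, k)` is `x`, and `j = d * k`. -/
lemma natDegree_eq_sum_divisorsAntidiagonal {n : ℕ} {f : F[X]} (hf : f ∈ monicsOfDegree F n) :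
    n = ∑ j ∈ Finset.Ioc 0 n, ∑ x ∈ j.divisorsAntidiagonal,
      ∑ P ∈ monicIrreduciblesOfDegree F x.1, if P ^ x.2 ∣ f then x.1 else 0 := by
  obtain ⟨hmonic, hdeg⟩ := mem_monicsOfDegree.1 hf
  have mul_le {d k : ℕ} {P : F[X]} (hP : P ∈ monicIrreduciblesOfDegree F d) (hdvd : P ^ k ∣ f) :
      d * k ≤ n := by
    rw [← hdeg, ← (mem_monicIrreduciblesOfDegree.1 hP).2.1, mul_comm, ← natDegree_pow]
    exact natDegree_le_of_dvd hdvd hmonic.ne_zero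
  rw [sum_Ioc_sum_divisorsAntidiagonal, Finset.sum_filter_of_ne, Finset.sum_product]
  · conv_lhs => rw [natDegree_eq_sum_mul_count hf]
    refine Finset.sum_congr rfl fun d hd ↦
      (Finset.sum_congr rfl fun P hP ↦ ?_).trans Finset.sum_comm
    obtain ⟨hPmonic, -, hPirr⟩ := mem_monicIrreduciblesOfDegree.1 hP
    have dvd_iff := pow_dvd_iff_le_count_normalizedFactors hmonic.ne_zero hPmonic hPirr
    have count_le : (normalizedFactors f).count P ≤ n :=
      (Nat.le_mul_of_pos_left _ (Finset.mem_Ioc.1 hd).1).trans (mul_le hP ((dvd_iff _).2 le_rfl))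
    have filter_eq : {k ∈ Finset.Ioc 0 n | P ^ k ∣ f} =
        Finset.Ioc 0 ((normalizedFactors f).count P) := by
      ext k
      rw [Finset.mem_filter, dvd_iff, Finset.mem_Ioc, Finset.mem_Ioc]
      lia
    rw [← Finset.sum_filter, filter_eq, Finset.sum_const, Nat.card_Ioc, smul_eq_mul, mul_comm,
      Nat.sub_zero]
  · rintro x - hx
    obtain ⟨P, hP, hne⟩ := Finset.exists_ne_zero_of_sum_ne_zero hx
    exact mul_le hP (ite_ne_right_iff.1 hne).1

end UniqueFactorization

variable {F R : Type*} [Field F]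

/-- A weight on polynomials that is multiplicative on monic ones. -/
structure IsMonicMultiplicative [CommSemiring R] (l : F[X] → R) : Prop where
  map_one : l 1 = 1
  map_mul {f g : F[X]} : f.Monic → g.Monic → l (f * g) = l f * l g

lemma IsMonicMultiplicative.map_pow [CommSemiring R] {l : F[X] → R}
    (hl : IsMonicMultiplicative l) {f : F[X]} (hf : f.Monic) (k : ℕ) :
    l (f ^ k) = l f ^ k := by
  induction k with
  | zero => rw [pow_zero, pow_zero, hl.map_one]
  | succ k ih => rw [pow_succ, hl.map_mul (hf.pow k) hf, ih, pow_succ]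

variable [Fintype F]

/-- The sum of the weight `l` over the monic polynomials of degree `n`, that is, the coefficient
of `T ^ n` in the `L`-series of `l`. -/
def monicSum [CommSemiring R] (l : F[X] → R) (n : ℕ) : R :=
  ∑ f ∈ monicsOfDegree F n, l f

/-- The coefficient of `T ^ n` in the logarithmic derivative `T * L' / L` of the Euler product
`L = ∏ P, (1 - l P * T ^ deg P)⁻¹`. -/
def eulerPowerSum [CommSemiring R] (l : F[X] → R) (n : ℕ) : R :=
  ∑ x ∈ n.divisorsAntidiagonal, x.1 * ∑ P ∈ monicIrreduciblesOfDegree F x.1, l P ^ x.2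

namespace IsMonicMultiplicative

section Semiring

variable [CommSemiring R] {l : F[X] → R}

lemma monicSum_zero (hl : IsMonicMultiplicative l) : monicSum l 0 = 1 := by
  rw [monicSum, monicsOfDegree_zero, Finset.sum_singleton, hl.map_one]

lemma sum_filter_dvd (hl : IsMonicMultiplicative l) {g : F[X]} (hg : g.Monic) {n : ℕ}
    (hn : g.natDegree ≤ n) :
    ∑ f ∈ monicsOfDegree F n with g ∣ f, l f = l g * monicSum l (n - g.natDegree) := by
  rw [monicSum, Finset.mul_sum]
  refine (Finset.sum_bij (fun f _ ↦ g * f) (fun f hf ↦ ?_) (fun f _ f' _ h ↦ ?_)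
    (fun f hf ↦ ?_) fun f hf ↦ ?_).symm
  · obtain ⟨hmonic, hdeg⟩ := mem_monicsOfDegree.1 hf
    refine Finset.mem_filter.2 ⟨mem_monicsOfDegree.2 ⟨hg.mul hmonic, ?_⟩, dvd_mul_right g f⟩
    rw [hg.natDegree_mul hmonic, hdeg, Nat.add_sub_cancel' hn]
  · exact mul_left_cancel₀ hg.ne_zero h
  · obtain ⟨hmem, f, rfl⟩ := Finset.mem_filter.1 hf
    obtain ⟨hmonic, hdeg⟩ := mem_monicsOfDegree.1 hmem
    have hf : f.Monic := hg.of_mul_monic_left hmonic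
    refine ⟨f, mem_monicsOfDegree.2 ⟨hf, ?_⟩, rfl⟩
    rw [← hdeg, hg.natDegree_mul hf, Nat.add_sub_cancel_left]
  · exact (hl.map_mul hg (mem_monicsOfDegree.1 hf).1).symm

theorem newton_identity (hl : IsMonicMultiplicative l) (n : ℕ) :
    n * monicSum l n = ∑ j ∈ Finset.Ioc 0 n, eulerPowerSum l j * monicSum l (n - j) := by
  have sum_pow_dvd {j : ℕ} (hj : j ∈ Finset.Ioc 0 n) {x : ℕ × ℕ} (hx : x ∈ j.divisorsAntidiagonal)
      {P : F[X]} (hP : P ∈ monicIrreduciblesOfDegree F x.1) :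
      ∑ f ∈ monicsOfDegree F n with P ^ x.2 ∣ f, l f = l P ^ x.2 * monicSum l (n - j) := by
    obtain ⟨hmonic, hdeg, -⟩ := mem_monicIrreduciblesOfDegree.1 hP
    have natDegree_pow_eq : (P ^ x.2).natDegree = j := by
      rw [natDegree_pow, hdeg, mul_comm, (Nat.mem_divisorsAntidiagonal.1 hx).1]
    rw [hl.sum_filter_dvd (hmonic.pow _) (natDegree_pow_eq ▸ (Finset.mem_Ioc.1 hj).2),
      hl.map_pow hmonic, natDegree_pow_eq]
  calc n * monicSum l n
      = ∑ f ∈ monicsOfDegree F n, ∑ j ∈ Finset.Ioc 0 n, ∑ x ∈ j.divisorsAntidiagonal,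
          ∑ P ∈ monicIrreduciblesOfDegree F x.1, x.1 * if P ^ x.2 ∣ f then l f else 0 := by
        rw [monicSum, Finset.mul_sum]
        refine Finset.sum_congr rfl fun f hf ↦ ?_
        conv_lhs => rw [natDegree_eq_sum_divisorsAntidiagonal hf]
        simp [Finset.sum_mul, ite_mul, mul_ite]
    _ = ∑ j ∈ Finset.Ioc 0 n, ∑ x ∈ j.divisorsAntidiagonal,
          ∑ P ∈ monicIrreduciblesOfDegree F x.1,
            x.1 * ∑ f ∈ monicsOfDegree F n with P ^ x.2 ∣ f, l f := by
        simp only [Finset.sum_filter, Finset.mul_sum]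
        rw [Finset.sum_comm]
        refine Finset.sum_congr rfl fun j _ ↦ ?_
        rw [Finset.sum_comm]
        refine Finset.sum_congr rfl fun x _ ↦ Finset.sum_comm
    _ = ∑ j ∈ Finset.Ioc 0 n, eulerPowerSum l j * monicSum l (n - j) := by
        refine Finset.sum_congr rfl fun j hj ↦ ?_
        rw [eulerPowerSum, Finset.sum_mul]
        refine Finset.sum_congr rfl fun x hx ↦ ?_
        rw [← Finset.mul_sum, mul_assoc, Finset.sum_mul]
        exact congrArg _ (Finset.sum_congr rfl fun P hP ↦ sum_pow_dvd hj hx hP)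

end Semiring

variable [CommRing R] {l : F[X] → R}

/-- Both the series `1 + a * T` (for `r = 0`) and `(1 - T) / (1 - r * T)` (for `a = r - 1`)
are of the form `(1 - (r - a) * T) / (1 - r * T)`. -/
theorem eulerPowerSum_succ (hl : IsMonicMultiplicative l) {a r : R}
    (h : ∀ n, monicSum l (n + 1) = a * r ^ n) (n : ℕ) :
    eulerPowerSum l (n + 1) = r ^ (n + 1) - (r - a) ^ (n + 1) := by
  let D (n : ℕ) : R := ∑ j ∈ Finset.Ioc 0 n, eulerPowerSum l j * (a * r ^ (n - j))
  have newton (n : ℕ) : ((n + 1 : ℕ) : R) * (a * r ^ n) = D n + eulerPowerSum l (n + 1) := by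
    rw [← h, hl.newton_identity, Finset.sum_Ioc_succ_top (Nat.zero_le n), Nat.sub_self,
      hl.monicSum_zero, mul_one]
    congr 1
    refine Finset.sum_congr rfl fun j hj ↦ ?_
    rw [Nat.succ_sub (Finset.mem_Ioc.1 hj).2, h]
  have D_succ (n : ℕ) : D (n + 1) = r * D n + a * eulerPowerSum l (n + 1) := by
    simp only [D]
    rw [Finset.sum_Ioc_succ_top (Nat.zero_le n), Finset.mul_sum, Nat.sub_self]
    congr 1
    · refine Finset.sum_congr rfl fun j hj ↦ ?_
      rw [Nat.succ_sub (Finset.mem_Ioc.1 hj).2, pow_succ]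
      ring
    · ring
  induction n with
  | zero =>
    have D_zero : D 0 = 0 := by simp [D]
    linear_combination -D_zero - newton 0
  | succ n ih =>
    have newton_n := newton n
    have newton_succ := newton (n + 1)
    push_cast at newton_n newton_succ
    linear_combination r * newton_n - newton_succ - D_succ n + (r - a) * ih

end IsMonicMultiplicative

end NewtonIdentities

section CharacterSums

/-- The product of the roots of a monic polynomial `f`, counted with multiplicity. -/
def rootsProd {F : Type*} [Field F] (f : F[X]) : F := (-1) ^ f.natDegree * f.coeff 0

/-- The sum of the roots of a monic polynomial `f`, counted with multiplicity. -/
def rootsSum {F : Type*} [Field F] (f : F[X]) : F := -f.nextCoeff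

/-- The weight of a monic polynomial determined by a multiplicative character of the product and
an additive character of the sum of its roots. -/
def charWeight {F R : Type*} [Field F] [CommRing R] (χ : MulChar F R) (ψ : AddChar F R)
    (f : F[X]) : R :=
  χ (rootsProd f) * ψ (rootsSum f)

section Field

variable {F R : Type*} [Field F] [CommRing R]

lemma rootsProd_X_sub_C (c : F) : rootsProd (X - C c) = c := by simp [rootsProd]

lemma rootsProd_ne_zero {f : F[X]} (hf : Irreducible f) (hdeg : f.natDegree ≠ 1) :
    rootsProd f ≠ 0 := by
  refine mul_ne_zero (pow_ne_zero _ (neg_ne_zero.2 one_ne_zero)) ?_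
  rw [coeff_zero_eq_eval_zero]
  exact hf.not_isRoot_of_natDegree_ne_one hdeg

lemma rootsSum_X_sub_C (c : F) : rootsSum (X - C c) = c := by simp [rootsSum, nextCoeff]

lemma isMonicMultiplicative_charWeight (χ : MulChar F R) (ψ : AddChar F R) :
    IsMonicMultiplicative (charWeight χ ψ) where
  map_one := by simp [charWeight, rootsProd, rootsSum, nextCoeff]
  map_mul {f g} hf hg := by
    have rootsProd_mul : rootsProd (f * g) = rootsProd f * rootsProd g := by
      rw [rootsProd, hf.natDegree_mul hg, mul_coeff_zero, rootsProd, rootsProd]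
      ring
    have rootsSum_mul : rootsSum (f * g) = rootsSum f + rootsSum g := by
      rw [rootsSum, hf.nextCoeff_mul hg, neg_add, rootsSum, rootsSum]
    rw [charWeight, rootsProd_mul, rootsSum_mul, _root_.map_mul, AddChar.map_add_eq_mul,
      charWeight, charWeight]
    ring

end Field

variable {F R : Type*} [Field F] [Fintype F] [CommRing R]

lemma monicSum_charWeight_one (χ : MulChar F R) (ψ : AddChar F R) :
    monicSum (charWeight χ ψ) 1 = gaussSum χ ψ := by
  simp only [monicSum, sum_monicsOfDegree_one, charWeight, rootsProd_X_sub_C, rootsSum_X_sub_C,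
    gaussSum]

lemma monicSum_charWeight_add_two (χ : MulChar F R) (ψ : AddChar F R) (n : ℕ) :
    monicSum (charWeight χ ψ) (n + 2) =
      (∑ x, χ x) * (∑ x, ψ x) * (Fintype.card F : R) ^ n := by
  have sum_mulChar : ∑ x, χ ((-1) ^ (n + 2) * x) = ∑ x, χ x :=
    Fintype.sum_equiv (Equiv.mulLeft₀ ((-1) ^ (n + 2)) (by simp)) _ _ fun _ ↦ rfl
  have sum_addChar : ∑ x, ψ (-x) = ∑ x, ψ x := Fintype.sum_equiv (Equiv.neg F) _ _ fun _ ↦ rfl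
  rw [← sum_mulChar, ← sum_addChar, ← sum_monicsOfDegree_coeff_mul_coeff n
    (fun x ↦ χ ((-1) ^ (n + 2) * x)) fun x ↦ ψ (-x)]
  refine Finset.sum_congr rfl fun f hf ↦ ?_
  have hdeg := (mem_monicsOfDegree.1 hf).2
  rw [charWeight, rootsProd, rootsSum, nextCoeff_of_natDegree_pos (by lia), hdeg]
  rfl

lemma eulerPowerSum_charWeight_of_ne_one [IsDomain R] {χ : MulChar F R} {ψ : AddChar F R}
    (h : χ ≠ 1 ∨ ψ ≠ 1) {n : ℕ} (hn : Odd n) :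
    eulerPowerSum (charWeight χ ψ) n = gaussSum χ ψ ^ n := by
  have monicSum_succ (k : ℕ) :
      monicSum (charWeight χ ψ) (k + 1) = gaussSum χ ψ * 0 ^ k := by
    cases k with
    | zero => rw [monicSum_charWeight_one, pow_zero, mul_one]
    | succ k =>
      rw [monicSum_charWeight_add_two]
      rcases h with h | h
      · simp [MulChar.sum_eq_zero_of_ne_one h]
      · simp [AddChar.sum_eq_zero_of_ne_one h]
  obtain ⟨k, rfl⟩ := hn
  rw [(isMonicMultiplicative_charWeight χ ψ).eulerPowerSum_succ monicSum_succ, zero_sub,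
    (odd_two_mul_add_one k).neg_pow, zero_pow (Nat.succ_ne_zero _), zero_sub, neg_neg]

lemma eulerPowerSum_charWeight_one {n : ℕ} (hn : n ≠ 0) :
    eulerPowerSum (charWeight (1 : MulChar F R) 1) n = (Fintype.card F : R) ^ n - 1 := by
  have card_units : (Fintype.card Fˣ : R) = Fintype.card F - 1 := by
    rw [Fintype.card_units, Nat.cast_sub Fintype.card_pos, Nat.cast_one]
  have monicSum_succ (k : ℕ) : monicSum (charWeight (1 : MulChar F R) 1) (k + 1) =
      (Fintype.card F - 1) * (Fintype.card F : R) ^ k := by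
    cases k with
    | zero =>
      rw [monicSum_charWeight_one, gaussSum_one_one, Nat.card_eq_fintype_card, card_units, pow_zero,
        mul_one]
    | succ k =>
      rw [monicSum_charWeight_add_two, MulChar.sum_one_eq_card_units, card_units]
      simp [pow_succ']
      ring
  obtain ⟨k, rfl⟩ := Nat.exists_eq_succ_of_ne_zero hn
  rw [(isMonicMultiplicative_charWeight 1 1).eulerPowerSum_succ monicSum_succ, sub_sub_cancel,
    one_pow]

/-- The sum of `χ (rootsProd P)` over the monic irreducible `P` of degree `m` whose roots have
sum `a`. -/
def irreducibleCharSum (χ : MulChar F R) (m : ℕ) (a : F) : R :=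
  ∑ P ∈ monicIrreduciblesOfDegree F m with rootsSum P = a, χ (rootsProd P)

/-- The analogue of `irreducibleCharSum` for the polynomials `(X - C c) ^ m`. -/
def linearCharSum (χ : MulChar F R) (m : ℕ) (a : F) : R :=
  ∑ c : F with m * c = a, χ (c ^ m)

/-- For a prime `m`, the coefficient at `a` of `eulerPowerSum (charWeight χ ψ) m` as a linear
combination of the values `ψ a`. -/
def charSum (χ : MulChar F R) (m : ℕ) (a : F) : R :=
  linearCharSum χ m a + m * irreducibleCharSum χ m a

lemma eulerPowerSum_charWeight_prime (χ : MulChar F R) (ψ : AddChar F R) {m : ℕ} (hm : m.Prime) :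
    eulerPowerSum (charWeight χ ψ) m = ∑ c : F, χ (c ^ m) * ψ (m * c) +
      m * ∑ P ∈ monicIrreduciblesOfDegree F m, charWeight χ ψ P := by
  have charWeight_pow (c : F) : charWeight χ ψ (X - C c) ^ m = χ (c ^ m) * ψ (m * c) := by
    rw [charWeight, rootsProd_X_sub_C, rootsSum_X_sub_C, mul_pow, ← map_pow,
      ← AddChar.map_nsmul_eq_pow, nsmul_eq_mul]
  rw [eulerPowerSum, Nat.sum_divisorsAntidiagonal
    (f := fun d k ↦ (d : R) * ∑ P ∈ monicIrreduciblesOfDegree F d, charWeight χ ψ P ^ k),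
    hm.sum_divisors, add_comm, Nat.div_one, Nat.div_self hm.pos, monicIrreduciblesOfDegree_one,
    sum_monicsOfDegree_one]
  simp only [charWeight_pow, pow_one, Nat.cast_one, one_mul]

lemma sum_addChar_mul_sum [IsDomain R] {ψ : AddChar F R} (hψ : ψ.IsPrimitive) {ι : Type*}
    (s : Finset ι) (w : ι → R) (x : ι → F) (a : F) :
    ∑ t, ψ (-(t * a)) * ∑ i ∈ s, w i * ψ (t * x i) =
      Fintype.card F * ∑ i ∈ s with x i = a, w i := by
  have orthogonality (i : ι) :
      ∑ t, ψ (-(t * a)) * ψ (t * x i) = if x i = a then (Fintype.card F : R) else 0 := by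
    simp only [← AddChar.map_add_eq_mul, neg_add_eq_sub, ← mul_sub]
    simpa only [sub_eq_zero, Nat.cast_ite, Nat.cast_zero] using AddChar.sum_mulShift (x i - a) hψ
  simp only [Finset.mul_sum, Finset.sum_filter]
  rw [Finset.sum_comm]
  refine Finset.sum_congr rfl fun i _ ↦ ?_
  rw [Finset.sum_congr rfl fun t _ ↦ mul_left_comm _ (w i) _, ← Finset.mul_sum, orthogonality]
  split_ifs <;> ring

lemma card_mul_charSum_eq_sum_eulerPowerSum [IsDomain R] (χ : MulChar F R) {ψ : AddChar F R}
    (hψ : ψ.IsPrimitive) {m : ℕ} (hm : m.Prime) (a : F) :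
    Fintype.card F * charSum χ m a =
      ∑ t, ψ (-(t * a)) * eulerPowerSum (charWeight χ (ψ.mulShift t)) m := by
  simp only [eulerPowerSum_charWeight_prime _ _ hm, mul_add, Finset.sum_add_distrib, charWeight,
    AddChar.mulShift_apply, mul_left_comm _ (m : R), ← Finset.mul_sum]
  rw [sum_addChar_mul_sum hψ, sum_addChar_mul_sum hψ, charSum, linearCharSum,
    irreducibleCharSum, mul_add, mul_left_comm]

lemma card_mul_charSum_one [IsDomain R] {ψ : AddChar F R} (hψ : ψ.IsPrimitive) {m : ℕ}
    (hm : m.Prime) (hodd : Odd m) (a : F) :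
    Fintype.card F * charSum (1 : MulChar F R) m a =
      Fintype.card F ^ m - if a = 0 then (Fintype.card F : R) else 0 := by
  have summand (t : F) : ψ (-(t * a)) * eulerPowerSum (charWeight 1 (ψ.mulShift t)) m =
      (if t = 0 then (Fintype.card F : R) ^ m else 0) - ψ (t * -a) := by
    split_ifs with ht
    · subst ht
      simp [AddChar.mulShift_zero, eulerPowerSum_charWeight_one hm.ne_zero]
    · have hne : ψ.mulShift t ≠ 1 := hψ ht
      rw [eulerPowerSum_charWeight_of_ne_one (Or.inr hne) hodd, gaussSum_one_left hne,
        hodd.neg_one_pow]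
      simp
  rw [card_mul_charSum_eq_sum_eulerPowerSum 1 hψ hm]
  simp only [summand, Finset.sum_sub_distrib, AddChar.sum_mulShift _ hψ]
  simp

lemma gaussSum_mulShift_eq_mul [IsDomain R] {χ : MulChar F R} (hχ : χ ≠ 1) (ψ : AddChar F R)
    (t : F) : gaussSum χ (ψ.mulShift t) = χ⁻¹ t * gaussSum χ ψ := by
  rcases eq_or_ne t 0 with rfl | ht
  · rw [AddChar.mulShift_zero, gaussSum_one_right hχ, MulChar.map_zero, zero_mul]
  · exact gaussSum_mulShift_eq χ ψ (Units.mk0 t ht)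

lemma card_mul_charSum_of_ne_one [IsDomain R] {χ : MulChar F R} {ψ : AddChar F R}
    (hψ : ψ.IsPrimitive) {m : ℕ} (hm : m.Prime) (hodd : Odd m) (hχm : χ ^ m ≠ 1) (a : F) :
    Fintype.card F * charSum χ m a =
      gaussSum χ ψ ^ m * ((χ ^ m) (-a) * gaussSum (χ⁻¹ ^ m) ψ) := by
  have hχ : χ ≠ 1 := by
    rintro rfl
    exact hχm (one_pow m)
  have shift := gaussSum_mulShift_eq_mul (χ := χ⁻¹ ^ m) (by simpa using hχm) ψ (-a)
  rw [inv_pow, inv_inv, ← inv_pow] at shift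
  rw [card_mul_charSum_eq_sum_eulerPowerSum χ hψ hm, ← shift, gaussSum.eq_def (χ⁻¹ ^ m),
    Finset.mul_sum]
  refine Finset.sum_congr rfl fun t _ ↦ ?_
  rw [eulerPowerSum_charWeight_of_ne_one (Or.inl hχ) hodd, gaussSum_mulShift_eq_mul hχ, mul_pow,
    MulChar.pow_apply' _ hm.ne_zero, AddChar.mulShift_apply, neg_mul, mul_comm a]
  ring

end CharacterSums

section LinearCharSum

variable {F R : Type*} [Field F] [Fintype F] [CommRing R] (χ : MulChar F R)

lemma linearCharSum_of_natCast_ne_zero {m : ℕ} (hm : (m : F) ≠ 0) (a : F) :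
    linearCharSum χ m a = (χ ^ m)⁻¹ m * (χ ^ m) a := by
  have hm0 : m ≠ 0 := by
    rintro rfl
    exact hm Nat.cast_zero
  have filter_eq : Finset.univ.filter (fun c : F ↦ m * c = a) = {(m : F)⁻¹ * a} := by
    ext c
    simp [eq_inv_mul_iff_mul_eq₀ hm]
  rw [linearCharSum, filter_eq, Finset.sum_singleton, map_pow, ← MulChar.pow_apply' χ hm0,
    map_mul, MulChar.inv_apply']

lemma linearCharSum_zero {m : ℕ} (hm : (m : F) ≠ 0) : linearCharSum χ m 0 = 0 := by
  rw [linearCharSum_of_natCast_ne_zero χ hm, MulChar.map_zero, mul_zero]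

lemma linearCharSum_one_of_ne_zero {m : ℕ} (hm : (m : F) ≠ 0) {a : F} (ha : a ≠ 0) :
    linearCharSum (1 : MulChar F R) m a = 1 := by
  rw [linearCharSum_of_natCast_ne_zero _ hm, one_pow, inv_one, MulChar.one_apply hm.isUnit,
    MulChar.one_apply ha.isUnit, one_mul]

lemma linearCharSum_of_natCast_eq_zero {m : ℕ} (hm : (m : F) = 0) {a : F} (ha : a ≠ 0) :
    linearCharSum χ m a = 0 := by
  simp [linearCharSum, hm, ha.symm]

lemma linearCharSum_char_zero (p : ℕ) [Fact p.Prime] [CharP F p] :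
    linearCharSum χ p 0 = ∑ c, χ c := by
  simp only [linearCharSum, CharP.cast_eq_zero, zero_mul, Finset.filter_true]
  exact Fintype.sum_bijective (frobenius F p) (bijective_frobenius F p) _ _ fun _ ↦ rfl

end LinearCharSum

section OrderThree

lemma sq_eq_inv_of_pow_three_eq_one {G : Type*} [DivisionMonoid G] {x : G} (hx : x ^ 3 = 1) :
    x ^ 2 = x⁻¹ :=
  eq_inv_of_mul_eq_one_left ((pow_succ x 2).symm.trans hx)

lemma pow_eq_self_of_mod_three_eq_one {G : Type*} [Monoid G] {x : G} (hx : orderOf x = 3) {m : ℕ}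
    (hm : m % 3 = 1) : x ^ m = x := by
  rw [← pow_mod_orderOf, hx, hm, pow_one]

lemma pow_eq_sq_of_mod_three_eq_two {G : Type*} [Monoid G] {x : G} (hx : orderOf x = 3) {m : ℕ}
    (hm : m % 3 = 2) : x ^ m = x ^ 2 := by
  rw [← pow_mod_orderOf, hx, hm]

lemma mulChar_apply_pow_eq_one {F R : Type*} [Field F] [CommRing R] {χ : MulChar F R} {n : ℕ}
    (hχ : χ ^ n = 1) {x : F} (hx : x ≠ 0) : χ x ^ n = 1 := by
  lift x to Fˣ using hx.isUnit
  rw [← MulChar.pow_apply_coe, hχ, MulChar.one_apply_coe]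

variable {F : Type*} [Field F] {χ : MulChar F ℂ}

lemma apply_neg_of_pow_three_eq_one (hχ : χ ^ 3 = 1) (a : F) : χ (-a) = χ a := by
  rw [neg_eq_neg_one_mul, map_mul, MulChar.val_neg_one_eq_one_of_odd_order (by decide) hχ, one_mul]

variable [Fintype F]

lemma charSum_one {m : ℕ} (hm : m.Prime) (hodd : Odd m) (a : F) :
    charSum (1 : MulChar F ℂ) m a = (Fintype.card F : ℂ) ^ (m - 1) - if a = 0 then 1 else 0 := by
  have card_ne_zero : (Fintype.card F : ℂ) ≠ 0 := Nat.cast_ne_zero.2 Fintype.card_ne_zero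
  refine mul_left_cancel₀ card_ne_zero ?_
  rw [card_mul_charSum_one (AddChar.FiniteField.primitiveChar_to_Complex_isPrimitive F) hm hodd,
    mul_sub, mul_pow_sub_one hm.ne_zero, mul_ite, mul_one, mul_zero]

lemma gaussSum_pow_three (hχ : orderOf χ = 3) {ψ : AddChar F ℂ} (hψ : ψ.IsPrimitive) :
    gaussSum χ ψ ^ 3 = Fintype.card F * jacobiSum χ χ := by
  have := gaussSum_pow_eq_prod_jacobiSum (χ := χ) (by lia) hψ
  simpa [hχ, apply_neg_of_pow_three_eq_one (hχ ▸ pow_orderOf_eq_one χ)] using this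

lemma gaussSum_mul_gaussSum_inv_of_orderOf_eq_three (hχ : orderOf χ = 3) {ψ : AddChar F ℂ}
    (hψ : ψ.IsPrimitive) : gaussSum χ ψ * gaussSum χ⁻¹ ψ = Fintype.card F := by
  have pow_three : χ ^ 3 = 1 := hχ ▸ pow_orderOf_eq_one χ
  have := gaussSum_mul_gaussSum_pow_orderOf_sub_one
    (orderOf_eq_one_iff.not.1 (hχ.trans_ne (by decide))) hψ
  rwa [hχ, sq_eq_inv_of_pow_three_eq_one pow_three, apply_neg_of_pow_three_eq_one pow_three,
    map_one, one_mul] at this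

lemma charSum_of_mod_three_eq_one (hχ : orderOf χ = 3) {m : ℕ} (hm : m.Prime) (hodd : Odd m)
    (hm3 : m % 3 = 1) (a : F) :
    charSum χ m a = (Fintype.card F * jacobiSum χ χ) ^ ((m - 1) / 3) * χ a := by
  have hψ := AddChar.FiniteField.primitiveChar_to_Complex_isPrimitive F
  have pow_three : χ ^ 3 = 1 := hχ ▸ pow_orderOf_eq_one χ
  have pow_eq := pow_eq_self_of_mod_three_eq_one hχ hm3
  have pow_ne : χ ^ m ≠ 1 := by
    rw [pow_eq]
    exact orderOf_eq_one_iff.not.1 (by lia)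
  refine mul_left_cancel₀ (Nat.cast_ne_zero.2 (Fintype.card_ne_zero (α := F))) ?_
  obtain ⟨k, rfl⟩ : ∃ k, m = 3 * k + 1 := ⟨m / 3, by lia⟩
  rw [card_mul_charSum_of_ne_one hψ hm hodd pow_ne, inv_pow, pow_eq,
    apply_neg_of_pow_three_eq_one pow_three, pow_succ, pow_mul, gaussSum_pow_three hχ hψ,
    Nat.add_sub_cancel, Nat.mul_div_cancel_left k three_pos]
  linear_combination (Fintype.card F * jacobiSum χ χ) ^ k * χ a *
    gaussSum_mul_gaussSum_inv_of_orderOf_eq_three hχ hψ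

lemma charSum_of_mod_three_eq_two (hχ : orderOf χ = 3) {m : ℕ} (hm : m.Prime) (hodd : Odd m)
    (hm3 : m % 3 = 2) (a : F) :
    charSum χ m a =
      (Fintype.card F : ℂ) ^ ((m - 2) / 3) * jacobiSum χ χ ^ ((m + 1) / 3) * χ a ^ 2 := by
  have hψ := AddChar.FiniteField.primitiveChar_to_Complex_isPrimitive F
  have pow_three : χ ^ 3 = 1 := hχ ▸ pow_orderOf_eq_one χ
  have pow_eq := pow_eq_sq_of_mod_three_eq_two hχ hm3
  have pow_ne : χ ^ m ≠ 1 := by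
    rw [pow_eq]
    exact pow_ne_one_of_lt_orderOf two_ne_zero (by lia)
  refine mul_left_cancel₀ (Nat.cast_ne_zero.2 (Fintype.card_ne_zero (α := F))) ?_
  obtain ⟨k, rfl⟩ : ∃ k, m = 3 * k + 2 := ⟨m / 3, by lia⟩
  have inv_sq : (χ ^ 2)⁻¹ = χ := by rw [sq_eq_inv_of_pow_three_eq_one pow_three, inv_inv]
  rw [card_mul_charSum_of_ne_one hψ hm hodd pow_ne, inv_pow, pow_eq, inv_sq,
    MulChar.pow_apply' _ two_ne_zero, apply_neg_of_pow_three_eq_one pow_three,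
    Nat.add_sub_cancel, Nat.mul_div_cancel_left k three_pos,
    show (3 * k + 2 + 1) / 3 = k + 1 by lia]
  linear_combination χ a ^ 2 *
    congrArg (· ^ (k + 1)) (gaussSum_pow_three hχ hψ)

lemma charSum_zero (hχ : orderOf χ = 3) {m : ℕ} (hm : m.Prime) (hodd : Odd m) (hm3 : ¬ 3 ∣ m) :
    charSum χ m 0 = 0 := by
  obtain h | h : m % 3 = 1 ∨ m % 3 = 2 := by lia
  · rw [charSum_of_mod_three_eq_one hχ hm hodd h, MulChar.map_zero, mul_zero]
  · rw [charSum_of_mod_three_eq_two hχ hm hodd h, MulChar.map_zero, zero_pow two_ne_zero, mul_zero]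

end OrderThree

section Cosets

lemma sq_re_of_pow_three_eq_one {z : ℂ} (hz : z ^ 3 = 1) : (z ^ 2).re = z.re := by
  have norm_eq : ‖z‖ = 1 := Complex.norm_eq_one_of_pow_eq_one hz (by norm_num)
  rw [sq_eq_inv_of_pow_three_eq_one hz, Complex.inv_eq_conj norm_eq, Complex.conj_re]

lemma one_add_two_mul_re_of_pow_three_eq_one {z : ℂ} (hz : z ^ 3 = 1) :
    1 + 2 * z.re = if z = 1 then 3 else 0 := by
  split_ifs with h
  · rw [h, Complex.one_re]; norm_num
  · have geom : 1 + z + z ^ 2 = 0 :=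
      mul_left_cancel₀ (sub_ne_zero.2 h) (by linear_combination hz)
    have := congrArg re geom
    rw [add_re, add_re, sq_re_of_pow_three_eq_one hz, one_re, zero_re] at this
    linarith

variable {F : Type*} [Field F] {g : Fˣ}

lemma isPrimitiveRoot_mulChar_apply {R : Type*} [CommRing R] (hg : ∀ u, u ∈ Subgroup.zpowers g)
    (χ : MulChar F R) : IsPrimitiveRoot (χ g) (orderOf χ) where
  pow_eq_one := mulChar_apply_pow_eq_one (pow_orderOf_eq_one χ) g.ne_zero
  dvd_of_pow_eq_one l hl := orderOf_dvd_of_pow_eq_one <| (MulChar.eq_iff hg _ _).2 <| by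
    rw [MulChar.pow_apply_coe, hl, MulChar.one_apply_coe]

lemma exists_eq_pow_add_mul_iff [Finite F] {R : Type*} [CommRing R] [Nontrivial R]
    (hg : ∀ u, u ∈ Subgroup.zpowers g)
    {χ : MulChar F R} {n : ℕ} (hχ : orderOf χ = n) (b : F) (h : ℕ) :
    (∃ k : ℕ, b = g ^ (h + n * k)) ↔ χ b = χ g ^ h := by
  have prim := isPrimitiveRoot_mulChar_apply hg χ
  rw [hχ] at prim
  refine ⟨?_, fun hb ↦ ?_⟩
  · rintro ⟨k, rfl⟩
    rw [map_pow, pow_add, pow_mul, prim.pow_eq_one, one_pow, mul_one]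
  · have hb0 : b ≠ 0 := by
      rintro rfl
      rw [MulChar.map_zero] at hb
      exact ((g.isUnit.map χ).pow h).ne_zero hb.symm
    lift b to Fˣ using hb0.isUnit
    obtain ⟨j, hj⟩ := mem_powers_iff_mem_zpowers.2 (hg (b * (g ^ h)⁻¹))
    obtain rfl : b = g ^ (h + j) := by rw [pow_add, mul_comm, ← mul_inv_eq_iff_eq_mul, ← hj]
    rw [Units.val_pow_eq_pow_val, map_pow, pow_add,
      (((g.isUnit.map χ).pow h).mul_eq_left)] at hb
    obtain ⟨k, rfl⟩ := prim.dvd_of_pow_eq_one j hb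
    exact ⟨k, Units.val_pow_eq_pow_val g _⟩

lemma three_mul_ite_coset [Finite F] (hg : ∀ u, u ∈ Subgroup.zpowers g) {χ : MulChar F ℂ}
    (hχ : orderOf χ = 3) (h : ℕ) {b : F} (hb : b ≠ 0) :
    (3 * if ∃ k : ℕ, b = g ^ (h + 3 * k) then 1 else 0 : ℂ) =
      (1 : MulChar F ℂ) b + 2 * ((χ b * χ g ^ (2 * h)).re : ℂ) := by
  have pow_three (u : Fˣ) : χ u ^ 3 = 1 :=
    mulChar_apply_pow_eq_one (hχ ▸ pow_orderOf_eq_one χ) u.ne_zero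
  have pow_mul_pow : χ g ^ (2 * h) * χ g ^ h = 1 := by
    rw [← pow_add, ← Nat.succ_mul, pow_mul, pow_three, one_pow]
  lift b to Fˣ using hb.isUnit
  have twist_pow_three : (χ b * χ g ^ (2 * h)) ^ 3 = 1 := by
    rw [mul_pow, pow_three, one_mul, ← pow_mul, mul_comm, pow_mul, pow_three, one_pow]
  have twist_eq_one_iff : χ b * χ g ^ (2 * h) = 1 ↔ χ b = χ g ^ h := by
    rw [← pow_mul_pow, mul_comm, mul_right_inj' (left_ne_zero_of_mul_eq_one pow_mul_pow)]
  have re_twist := congrArg ofReal (one_add_two_mul_re_of_pow_three_eq_one twist_pow_three)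
  rw [exists_eq_pow_add_mul_iff hg hχ, ← twist_eq_one_iff, MulChar.one_apply_coe]
  split_ifs at re_twist ⊢ <;> push_cast at re_twist <;> linear_combination -re_twist

variable [Fintype F]

lemma PP_eq_card {m : ℕ} (hm : 0 < m) (g : F) (s h : ℕ) (a : F) :
    PP F g m s h a = (monicIrreduciblesOfDegree F m |>.filter fun P ↦ rootsSum P = a ∧
      ∃ k : ℕ, rootsProd P = g ^ (h + s * k)).card := by
  refine Nat.subtype_card _ fun f ↦ ?_
  rw [Finset.mem_filter, mem_monicIrreduciblesOfDegree, and_assoc, and_assoc]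
  refine and_congr_right fun _ ↦ and_congr_right fun hdeg ↦ and_congr_right fun _ ↦ ?_
  rw [rootsSum, rootsProd, nextCoeff_of_natDegree_pos (hdeg ▸ hm), hdeg, neg_eq_iff_eq_neg]

lemma three_mul_PP {m : ℕ} (hm : 1 < m) (hg : ∀ u, u ∈ Subgroup.zpowers g) {χ : MulChar F ℂ}
    (hχ : orderOf χ = 3) (h : ℕ) (a : F) :
    3 * (PP F g m 3 h a : ℂ) = irreducibleCharSum (1 : MulChar F ℂ) m a +
      2 * ((irreducibleCharSum χ m a * χ g ^ (2 * h)).re : ℂ) := by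
  rw [PP_eq_card (by lia), ← Finset.filter_filter, Finset.card_filter, irreducibleCharSum,
    irreducibleCharSum, Finset.sum_mul, re_sum, ofReal_sum, Finset.mul_sum, Nat.cast_sum,
    Finset.mul_sum, ← Finset.sum_add_distrib]
  refine Finset.sum_congr rfl fun P hP ↦ ?_
  obtain ⟨-, hdeg, hirr⟩ := mem_monicIrreduciblesOfDegree.1 (Finset.mem_filter.1 hP).1
  rw [← three_mul_ite_coset hg hχ h (rootsProd_ne_zero hirr (by lia)), Nat.cast_ite,
    Nat.cast_one, Nat.cast_zero]

lemma PP_eq_charSum_sub_linearCharSum {m : ℕ} (hm : 1 < m) (hg : ∀ u, u ∈ Subgroup.zpowers g)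
    {χ : MulChar F ℂ} (hχ : orderOf χ = 3) (h : ℕ) (a : F) :
    (PP F g m 3 h a : ℂ) = 1 / (3 * m) *
      (charSum (1 : MulChar F ℂ) m a - linearCharSum (1 : MulChar F ℂ) m a +
        2 * (((charSum χ m a - linearCharSum χ m a) * χ g ^ (2 * h)).re : ℂ)) := by
  have natCast_ne_zero : (m : ℂ) ≠ 0 := Nat.cast_ne_zero.2 (by lia)
  rw [charSum, charSum, add_sub_cancel_left, add_sub_cancel_left, mul_assoc (m : ℂ),
    ← ofReal_natCast m, re_ofReal_mul, ofReal_mul, ofReal_natCast, one_div,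
    eq_inv_mul_iff_mul_eq₀ (mul_ne_zero three_ne_zero natCast_ne_zero)]
  linear_combination m * three_mul_PP hm hg hχ h a

variable {m : ℕ} (hm : m.Prime) (hodd : Odd m) (hg : ∀ u, u ∈ Subgroup.zpowers g) {χ : MulChar F ℂ}
  (hχ : orderOf χ = 3) (h : ℕ) {a : F}

include hm hodd hg hχ

lemma PP_zero_of_charP [CharP F m] (hm3 : ¬ 3 ∣ m) :
    (PP F g m 3 h 0 : ℂ) = Fintype.card F / (3 * m) * ((Fintype.card F : ℂ) ^ (m - 2) - 1) := by
  have : Fact m.Prime := ⟨hm⟩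
  have χ_ne_one : χ ≠ 1 := orderOf_eq_one_iff.not.1 (by lia)
  rw [PP_eq_charSum_sub_linearCharSum hm.one_lt hg hχ, charSum_one hm hodd, if_pos rfl,
    charSum_zero hχ hm hodd hm3, linearCharSum_char_zero, linearCharSum_char_zero,
    MulChar.sum_eq_zero_of_ne_one χ_ne_one, MulChar.sum_one_eq_card_units, Fintype.card_units,
    Nat.cast_sub Fintype.card_pos, Nat.cast_one, sub_zero, zero_mul, zero_re, ofReal_zero,
    show m - 1 = m - 2 + 1 from (Nat.succ_pred_eq_of_pos (Nat.sub_pos_of_lt hm.one_lt)).symm]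
  ring

lemma PP_zero_of_natCast_ne_zero (hm0 : (m : F) ≠ 0) (hm3 : ¬ 3 ∣ m) :
    (PP F g m 3 h 0 : ℂ) = 1 / (3 * m) * ((Fintype.card F : ℂ) ^ (m - 1) - 1) := by
  rw [PP_eq_charSum_sub_linearCharSum hm.one_lt hg hχ, charSum_one hm hodd, if_pos rfl,
    charSum_zero hχ hm hodd hm3, linearCharSum_zero _ hm0, linearCharSum_zero _ hm0, sub_zero,
    sub_zero, zero_mul, zero_re, ofReal_zero, mul_zero, add_zero]

lemma PP_of_natCast_eq_zero (hm0 : (m : F) = 0) (ha : a ≠ 0) :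
    (PP F g m 3 h a : ℂ) = 1 / (3 * m) * ((Fintype.card F : ℂ) ^ (m - 1) +
      2 * ((charSum χ m a * χ g ^ (2 * h)).re : ℂ)) := by
  rw [PP_eq_charSum_sub_linearCharSum hm.one_lt hg hχ, charSum_one hm hodd, if_neg ha,
    linearCharSum_of_natCast_eq_zero _ hm0 ha, linearCharSum_of_natCast_eq_zero _ hm0 ha,
    sub_zero, sub_zero, sub_zero]

lemma PP_of_natCast_ne_zero (hm0 : (m : F) ≠ 0) (ha : a ≠ 0) :
    (PP F g m 3 h a : ℂ) = 1 / (3 * m) * ((Fintype.card F : ℂ) ^ (m - 1) - 1 +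
      2 * (((charSum χ m a - (χ ^ m)⁻¹ m * (χ ^ m) a) * χ g ^ (2 * h)).re : ℂ)) := by
  rw [PP_eq_charSum_sub_linearCharSum hm.one_lt hg hχ, charSum_one hm hodd, if_neg ha,
    linearCharSum_one_of_ne_zero hm0 ha, linearCharSum_of_natCast_ne_zero _ hm0, sub_zero]

end Cosets

section JacobiSum

variable {F : Type*} [Field F]

lemma four_ne_zero_of_two_ne_zero (h2 : (2 : F) ≠ 0) : (4 : F) ≠ 0 := by
  rw [show (4 : F) = 2 ^ 2 by norm_num]
  exact pow_ne_zero 2 h2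

lemma map_eq_sum_ite [Finite F] {S R : Type*} [CommRing S] [IsDomain S] [CommSemiring R] {g : Fˣ}
    (hg : ∀ u, u ∈ Subgroup.zpowers g) {χ : MulChar F S} {n : ℕ} (hχ : orderOf χ = n)
    (f : F →*₀ R) (hf : f g ^ n = 1) (t : F) :
    f t = ∑ k ∈ Finset.range n, if χ t = χ g ^ k then f g ^ k else 0 := by
  have prim := hχ ▸ isPrimitiveRoot_mulChar_apply hg χ
  have n_pos : 0 < n := hχ ▸ orderOf_pos χ
  rcases eq_or_ne t 0 with rfl | ht
  · rw [map_zero, MulChar.map_zero]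
    exact (Finset.sum_eq_zero fun k _ ↦ if_neg (pow_ne_zero k (g.isUnit.map χ).ne_zero).symm).symm
  lift t to Fˣ using ht.isUnit
  obtain ⟨j, rfl⟩ := mem_powers_iff_mem_zpowers.2 (hg t)
  have hj : j % n < n := Nat.mod_lt j n_pos
  rw [Units.val_pow_eq_pow_val, map_pow, map_pow, pow_eq_pow_mod j hf,
    pow_eq_pow_mod j prim.pow_eq_one, Finset.sum_eq_single_of_mem (j % n) (Finset.mem_range.2 hj),
    if_pos rfl]
  intro k hk hne
  exact if_neg fun h ↦ hne (prim.pow_inj hj (Finset.mem_range.1 hk) h).symm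

lemma sum_map_eq_sum_card_mul [Finite F] {S R ι : Type*} [CommRing S] [IsDomain S]
    [CommSemiring R] {g : Fˣ} (hg : ∀ u, u ∈ Subgroup.zpowers g) {χ : MulChar F S} {n : ℕ}
    (hχ : orderOf χ = n) (f : F →*₀ R) (hf : f g ^ n = 1) (s : Finset ι) (x : ι → F) :
    ∑ i ∈ s, f (x i) = ∑ k ∈ Finset.range n,
      (s.filter fun i ↦ χ (x i) = χ g ^ k).card * f g ^ k := by
  rw [Finset.sum_congr rfl fun i _ ↦ map_eq_sum_ite hg hχ f hf (x i), Finset.sum_comm]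
  refine Finset.sum_congr rfl fun k _ ↦ ?_
  rw [← Finset.sum_filter, Finset.sum_const, nsmul_eq_mul]

lemma even_card_of_neg_mem {G : Type*} [AddGroup G] {s : Finset G} (hs : ∀ x ∈ s, -x ∈ s)
    (hne : ∀ x ∈ s, -x ≠ x) : Even s.card := by
  rw [← ZMod.natCast_eq_zero_iff_even, Finset.card_eq_sum_ones, Nat.cast_sum]
  exact Finset.sum_involution (fun x _ ↦ -x) (fun _ _ ↦ by decide) (fun x hx _ ↦ hne x hx) hs
    fun x _ ↦ neg_neg x

variable [Fintype F]

lemma apply_four_mul_jacobiSum_self {R : Type*} [CommRing R] (h2 : (2 : F) ≠ 0)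
    (χ : MulChar F R) : χ 4 * jacobiSum χ χ = ∑ y, χ (1 - y ^ 2) := by
  rw [jacobiSum, Finset.mul_sum]
  refine Fintype.sum_equiv ((Equiv.mulLeft₀ 2 h2).trans (Equiv.subLeft 1)) _ _ fun x ↦ ?_
  rw [← map_mul, ← map_mul, Equiv.trans_apply, Equiv.mulLeft₀_apply, Equiv.subLeft_apply]
  congr 1
  ring

lemma sum_one_sub_sq_pow {k : ℕ} (hk : 2 * k < Fintype.card F - 1) :
    ∑ y : F, (1 - y ^ 2) ^ k = 0 := by
  have expand (y : F) : (1 - y ^ 2) ^ k =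
      ∑ i ∈ Finset.range (k + 1), (-1) ^ i * k.choose i * y ^ (2 * i) := by
    rw [sub_eq_neg_add, add_pow]
    refine Finset.sum_congr rfl fun i _ ↦ ?_
    rw [neg_pow, pow_mul, one_pow]
    ring
  simp only [expand]
  rw [Finset.sum_comm]
  refine Finset.sum_eq_zero fun i hi ↦ ?_
  rw [Finset.mem_range] at hi
  rw [← Finset.mul_sum, FiniteField.sum_pow_lt_card_sub_one F _ (by lia), mul_zero]

lemma isPrimitiveRoot_generator_pow {g : Fˣ} (hg : ∀ u, u ∈ Subgroup.zpowers g) {k n : ℕ}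
    (h : Fintype.card F - 1 = k * n) : IsPrimitiveRoot (g ^ k : F) n := by
  refine IsPrimitiveRoot.pow (Nat.sub_pos_of_lt Fintype.one_lt_card) ?_ h
  rw [IsPrimitiveRoot.coe_units_iff, ← Fintype.card_units, ← Nat.card_eq_fintype_card,
    ← orderOf_eq_card_of_forall_mem_zpowers hg]
  exact IsPrimitiveRoot.orderOf g

/-- The number of `y` with `χ (1 - y ^ 2) = c`. Sorting the terms of `∑ y, f (1 - y ^ 2)` by the
value of `χ` expresses this sum through these numbers for every multiplicative `f`. -/
def oneSubSqCount {S : Type*} [CommRing S] (χ : MulChar F S) (c : S) : ℕ :=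
  (Finset.univ.filter fun y : F ↦ χ (1 - y ^ 2) = c).card

section

variable {S : Type*} [CommRing S] (h2 : (2 : F) ≠ 0) {g : Fˣ}
  (hg : ∀ u, u ∈ Subgroup.zpowers g) {χ : MulChar F S}

include h2 in
lemma even_oneSubSqCount {c : S} (hc : c ≠ 1) : Even (oneSubSqCount χ c) := by
  refine even_card_of_neg_mem (fun y hy ↦ ?_) fun y hy h ↦ ?_
  · simpa only [Finset.mem_filter_univ, neg_sq] using hy
  · have y_eq_zero : y = 0 :=
      (mul_eq_zero.1 (by linear_combination -h : 2 * y = 0)).resolve_left h2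
    rw [Finset.mem_filter_univ, y_eq_zero, zero_pow two_ne_zero, sub_zero, map_one] at hy
    exact hc hy.symm

variable [IsDomain S] (hχ : orderOf χ = 3)

include hg hχ

lemma sum_map_one_sub_sq {R : Type*} [CommRing R] (f : F →*₀ R) (hf : f g ^ 3 = 1) :
    ∑ y, f (1 - y ^ 2) = oneSubSqCount χ 1 + oneSubSqCount χ (χ g) * f g +
      oneSubSqCount χ (χ g ^ 2) * f g ^ 2 := by
  simp only [sum_map_eq_sum_card_mul hg hχ f hf, Finset.sum_range_succ, Finset.sum_range_zero,
    zero_add, pow_zero, pow_one, mul_one, oneSubSqCount]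

include h2

lemma sum_oneSubSqCount :
    (oneSubSqCount χ 1 + oneSubSqCount χ (χ g) + oneSubSqCount χ (χ g ^ 2) : ℤ) =
      Fintype.card F - 2 := by
  have sum_one := apply_four_mul_jacobiSum_self h2 (1 : MulChar F ℤ)
  rw [jacobiSum_one_one, MulChar.one_apply (four_ne_zero_of_two_ne_zero h2).isUnit,
    one_mul] at sum_one
  have sum_eq := sum_map_one_sub_sq hg hχ (1 : MulChar F ℤ).toMonoidWithZeroHom
    (mulChar_apply_pow_eq_one (one_pow 3) g.ne_zero)
  change ∑ y, (1 : MulChar F ℤ) (1 - y ^ 2) =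
    _ + _ * (1 : MulChar F ℤ) g + _ * (1 : MulChar F ℤ) g ^ 2 at sum_eq
  rw [sum_one, sum_eq, MulChar.one_apply_coe, one_pow, mul_one, mul_one]

lemma exists_apply_four_mul_jacobiSum_self_eq : ∃ A B : ℤ,
    χ 4 * jacobiSum χ χ = A + B * (1 + 2 * χ g) ∧ A ≡ -1 [ZMOD 3] ∧
      (A + B * (1 + 2 * g ^ ((Fintype.card F - 1) / 3)) : F) = 0 := by
  obtain ⟨k, hk⟩ : 3 ∣ Fintype.card F - 1 := hχ ▸ χ.orderOf_dvd_card_sub_one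
  have card_gt : 1 < Fintype.card F := Fintype.one_lt_card
  have hζ := hχ ▸ isPrimitiveRoot_mulChar_apply hg χ
  have hw := isPrimitiveRoot_generator_pow hg (hk.trans (mul_comm 3 k))
  have geom_ζ := hζ.geom_sum_eq_zero (by decide)
  have geom_w := hw.geom_sum_eq_zero (by decide)
  obtain ⟨n₁, hn₁⟩ := even_oneSubSqCount (χ := χ) h2 (hζ.ne_one (by decide))
  obtain ⟨n₂, hn₂⟩ := even_oneSubSqCount (χ := χ) h2
    (hζ.pow_ne_one_of_pos_of_lt two_ne_zero (by decide))
  have sum_char : ∑ y, χ (1 - y ^ 2) = _ :=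
    sum_map_one_sub_sq hg hχ χ.toMonoidWithZeroHom hζ.pow_eq_one
  have sum_pow : ∑ y : F, (1 - y ^ 2) ^ k = _ :=
    sum_map_one_sub_sq hg hχ (powMonoidWithZeroHom (by lia : k ≠ 0)) hw.pow_eq_one
  have sum_count := sum_oneSubSqCount h2 hg hχ
  rw [hn₁, hn₂] at sum_char sum_pow sum_count
  simp only [Finset.sum_range_succ, Finset.sum_range_zero, zero_add, pow_zero, pow_one]
    at geom_ζ geom_w
  refine ⟨oneSubSqCount χ 1 - n₁ - n₂, n₁ - n₂, ?_, ?_, ?_⟩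
  · rw [apply_four_mul_jacobiSum_self h2, sum_char, MulChar.toMonoidWithZeroHom_apply]
    push_cast
    linear_combination 2 * n₂ * geom_ζ
  · rw [Int.modEq_iff_dvd]
    lia
  · rw [sum_one_sub_sq_pow (by lia), powMonoidWithZeroHom_apply] at sum_pow
    rw [hk, Nat.mul_div_cancel_left k three_pos]
    push_cast at sum_pow ⊢
    linear_combination -sum_pow - 2 * n₂ * geom_w

end

end JacobiSum

section PrimeField

lemma star_jacobiSum {F : Type*} [CommRing F] [Fintype F] (χ φ : MulChar F ℂ) :
    star (jacobiSum χ φ) = jacobiSum χ⁻¹ φ⁻¹ := by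
  rw [jacobiSum, jacobiSum, star_sum]
  refine Finset.sum_congr rfl fun x _ ↦ ?_
  rw [star_mul', MulChar.star_apply', MulChar.star_apply']

lemma normSq_jacobiSum {F : Type*} [Field F] [Fintype F] {χ φ : MulChar F ℂ} (hχ : χ ≠ 1)
    (hφ : φ ≠ 1) (hχφ : χ * φ ≠ 1) : normSq (jacobiSum χ φ) = Fintype.card F := by
  have ringChar_ne : ringChar ℂ ≠ ringChar F := by
    rw [ringChar.eq_zero]
    exact (CharP.ringChar_ne_zero_of_finite F).symm
  rw [← ofReal_inj, normSq_eq_conj_mul_self, mul_comm, starRingEnd_apply, star_jacobiSum,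
    jacobiSum_mul_jacobiSum_inv ringChar_ne hχ hφ hχφ, ofReal_natCast]

lemma one_add_two_mul_exp_two_pi_I_div_three :
    1 + 2 * exp (2 * Real.pi * I / 3) = I * (Real.sqrt 3 : ℂ) := by
  have angle : (2 * Real.pi * I / 3 : ℂ) = ((Real.pi - Real.pi / 3 : ℝ) : ℂ) * I := by
    push_cast
    ring
  rw [angle, exp_mul_I, ← ofReal_cos, ← ofReal_sin, Real.cos_pi_sub, Real.sin_pi_sub,
    Real.cos_pi_div_three, Real.sin_pi_div_three]
  push_cast
  ring

-- Brahmagupta's identity writes `n ^ 2` as `(a * c + D * b * d) ^ 2 + D * (a * d - c * b) ^ 2`.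
lemma eq_or_eq_neg_of_sq_add_mul_sq_eq {D n a b c d : ℤ} (hD : 1 < D) (hn : n ≠ 0)
    (hab : a ^ 2 + D * b ^ 2 = n) (hcd : c ^ 2 + D * d ^ 2 = n) (hdvd : n ∣ a * d - c * b) :
    (a = c ∧ b = d) ∨ (a = -c ∧ b = -d) := by
  obtain ⟨k, hk⟩ := hdvd
  have brahmagupta : (a * c + D * b * d) ^ 2 + D * (a * d - c * b) ^ 2 = n ^ 2 := by
    linear_combination (c ^ 2 + D * d ^ 2) * hab + n * hcd
  have k_eq_zero : k = 0 := by
    by_contra hk0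
    have : 1 ≤ k ^ 2 := Int.add_one_le_iff.2 (sq_pos_of_ne_zero hk0)
    rw [hk] at brahmagupta
    nlinarith [sq_nonneg (a * c + D * b * d), sq_pos_of_ne_zero hn]
  have cross : a * d = c * b := by rwa [k_eq_zero, mul_zero, sub_eq_zero] at hk
  rw [cross, sub_self, zero_pow two_ne_zero, mul_zero, add_zero, sq_eq_sq_iff_eq_or_eq_neg]
    at brahmagupta
  refine brahmagupta.imp (fun h ↦ ⟨?_, ?_⟩) fun h ↦ ⟨?_, ?_⟩ <;> refine mul_left_cancel₀ hn ?_
  · linear_combination -a * h + D * b * cross + c * hab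
  · linear_combination -b * h - a * cross + d * hab
  · linear_combination a * h - D * b * cross - c * hab
  · linear_combination b * h + a * cross - d * hab

variable {F : Type*} [Field F] [Fintype F] {g : Fˣ} {χ : MulChar F ℂ}

lemma exists_apply_four_mul_jacobiSum_self_eq_sqrt (h2 : (2 : F) ≠ 0)
    (hg : ∀ u, u ∈ Subgroup.zpowers g) (hχ : orderOf χ = 3)
    (hζ : χ g = exp (2 * Real.pi * I / 3)) : ∃ A B : ℤ,
      χ 4 * jacobiSum χ χ = A + I * B * (Real.sqrt 3 : ℂ) ∧
        A ^ 2 + 3 * B ^ 2 = (Fintype.card F : ℤ) ∧ A ≡ -1 [ZMOD 3] ∧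
          (A + B * (1 + 2 * g ^ ((Fintype.card F - 1) / 3)) : F) = 0 := by
  obtain ⟨A, B, eval, hA, hw⟩ := exists_apply_four_mul_jacobiSum_self_eq h2 hg hχ
  rw [hζ, one_add_two_mul_exp_two_pi_I_div_three, ← mul_assoc, mul_comm (B : ℂ)] at eval
  refine ⟨A, B, eval, ?_, hA, hw⟩
  have χ_ne_one : χ ≠ 1 := orderOf_eq_one_iff.not.1 (by lia)
  have sq_ne_one : χ * χ ≠ 1 := sq χ ▸ pow_ne_one_of_lt_orderOf two_ne_zero (by lia)
  have norm_apply_four : ‖χ 4‖ = 1 := norm_eq_one_of_pow_eq_one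
    (mulChar_apply_pow_eq_one (hχ ▸ pow_orderOf_eq_one χ) (four_ne_zero_of_two_ne_zero h2))
    three_ne_zero
  have norm_eq := congrArg normSq eval
  rw [map_mul, normSq_jacobiSum χ_ne_one χ_ne_one sq_ne_one, normSq_eq_norm_sq,
    norm_apply_four, one_pow, one_mul, mul_assoc, mul_comm I, ← ofReal_intCast,
    ← ofReal_intCast, ← ofReal_mul, normSq_add_mul_I, mul_pow, Real.sq_sqrt zero_le_three]
    at norm_eq
  have : ((A ^ 2 + 3 * B ^ 2 : ℤ) : ℝ) = (Fintype.card F : ℤ) := by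
    push_cast
    rw [norm_eq, mul_comm]
  exact_mod_cast this

lemma apply_two_mul_eq_jacobiSum {p : ℕ} [Fact p.Prime] {g : (ZMod p)ˣ}
    (hg : ∀ u, u ∈ Subgroup.zpowers g) {χ : MulChar (ZMod p) ℂ} (hχ : orderOf χ = 3)
    (hζ : χ g = exp (2 * Real.pi * I / 3)) {a b : ℤ} (hab : a ^ 2 + 3 * b ^ 2 = (p : ℤ))
    (ha : a ≡ -1 [ZMOD 3])
    (hb : ((3 * b : ℤ) : ZMod p) = (2 * (g : ZMod p) ^ ((p - 1) / 3) + 1) * (a : ZMod p)) :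
    χ 2 * (a + I * b * (Real.sqrt 3 : ℂ)) = jacobiSum χ χ := by
  have p_prime : p.Prime := Fact.out
  obtain ⟨k, hk⟩ : 3 ∣ p - 1 := ZMod.card p ▸ hχ ▸ χ.orderOf_dvd_card_sub_one
  have small_ne_zero {n : ℕ} (h0 : n ≠ 0) (hn : n < 4) : (n : ZMod p) ≠ 0 := by
    rw [Ne, ZMod.natCast_eq_zero_iff]
    exact Nat.not_dvd_of_pos_of_lt (by lia) (by have := p_prime.two_le; lia)
  have h2 : (2 : ZMod p) ≠ 0 := small_ne_zero two_ne_zero (by decide)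
  have h3 : (3 : ZMod p) ≠ 0 := small_ne_zero three_ne_zero (by decide)
  obtain ⟨A, B, eval, hAB, hA, hw⟩ := exists_apply_four_mul_jacobiSum_self_eq_sqrt h2 hg hχ hζ
  rw [ZMod.card] at hAB hw
  have geom_w := (isPrimitiveRoot_generator_pow hg (k := k) (n := 3)
    (by rw [ZMod.card, hk, mul_comm])).geom_sum_eq_zero (by decide)
  simp only [Finset.sum_range_succ, Finset.sum_range_zero, zero_add, pow_zero, pow_one] at geom_w
  rw [hk, Nat.mul_div_cancel_left k three_pos] at hb hw
  push_cast at hb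
  have hw' : (a + b * (1 + 2 * g ^ k) : ZMod p) = 0 := by
    refine mul_left_cancel₀ h3 ?_
    linear_combination (1 + 2 * (g : ZMod p) ^ k) * hb + 4 * a * geom_w
  have dvd : (p : ℤ) ∣ A * b - a * B := by
    rw [← ZMod.intCast_zmod_eq_zero_iff_dvd]
    push_cast
    linear_combination b * hw - B * hw'
  have pow_three : χ 2 ^ 3 = 1 := mulChar_apply_pow_eq_one (hχ ▸ pow_orderOf_eq_one χ) h2
  obtain ⟨rfl, rfl⟩ | ⟨rfl, -⟩ := eq_or_eq_neg_of_sq_add_mul_sq_eq (by decide)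
    (Int.natCast_ne_zero.2 p_prime.ne_zero) hAB hab dvd
  · rw [← eval, show (4 : ZMod p) = 2 ^ 2 by norm_num, map_pow]
    linear_combination jacobiSum χ χ * pow_three
  · rw [Int.modEq_iff_dvd] at hA ha
    lia

end PrimeField

theorem stmt16_general {F : Type*} [Field F] [Fintype F] (p m h : ℕ) [CharP F p]
    (hm : m.Prime) (hm3 : 3 < m) (g : Fˣ) (hg : ∀ u : Fˣ, u ∈ Subgroup.zpowers g)
    (χ3 : MulChar F ℂ) (hχ3o : orderOf χ3 = 3) (a : F) :
    (a = 0 → m = p →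
      (PP F g m 3 h a : ℂ) =
        Fintype.card F / (3 * p) * ((Fintype.card F : ℂ) ^ (p - 2) - 1)) ∧
    (a = 0 → m ≠ p →
      (PP F g m 3 h a : ℂ) = 1 / (3 * m) * ((Fintype.card F : ℂ) ^ (m - 1) - 1)) ∧
    (a ≠ 0 → m = p → p % 3 = 1 →
      (PP F g m 3 h a : ℂ) = 1 / (3 * p) * ((Fintype.card F : ℂ) ^ (p - 1) +
        2 * (Fintype.card F : ℂ) ^ ((p - 1) / 3) *
          ((jacobiSum χ3 χ3 ^ ((p - 1) / 3) * χ3 a * χ3 g ^ (2 * h)).re : ℂ))) ∧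
    (a ≠ 0 → m = p → p % 3 = 2 →
      (PP F g m 3 h a : ℂ) = 1 / (3 * p) * ((Fintype.card F : ℂ) ^ (p - 1) +
        2 * (Fintype.card F : ℂ) ^ ((p - 2) / 3) *
          ((jacobiSum χ3 χ3 ^ ((p + 1) / 3) * χ3 a ^ 2 * χ3 g ^ (2 * h)).re : ℂ))) ∧
    (a ≠ 0 → m ≠ p → m % 3 = 1 →
      (PP F g m 3 h a : ℂ) = 1 / (3 * m) * ((Fintype.card F : ℂ) ^ (m - 1) - 1 +
        2 * ((((Fintype.card F * jacobiSum χ3 χ3) ^ ((m - 1) / 3) - χ3⁻¹ (m : F)) *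
          χ3 a * χ3 g ^ (2 * h)).re : ℂ))) ∧
    (a ≠ 0 → m ≠ p → m % 3 = 2 →
      (PP F g m 3 h a : ℂ) = 1 / (3 * m) * ((Fintype.card F : ℂ) ^ (m - 1) - 1 +
        2 * ((((Fintype.card F : ℂ) ^ ((m - 2) / 3) * jacobiSum χ3 χ3 ^ ((m + 1) / 3) * χ3 a *
          χ3 g ^ h - χ3⁻¹ (m : F)) * χ3 a * χ3 g ^ h).re : ℂ))) := by
  have hodd : Odd m := hm.odd_of_ne_two (by lia)
  have not_dvd : ¬ 3 ∣ m := fun h3 ↦ by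
    have := (Nat.prime_dvd_prime_iff_eq Nat.prime_three hm).1 h3
    lia
  have natCast_ne_zero (hmp : m ≠ p) : (m : F) ≠ 0 := by
    rw [Ne, CharP.cast_eq_zero_iff F p, Nat.dvd_prime hm]
    exact not_or.2 ⟨CharP.char_ne_one F p, Ne.symm hmp⟩
  have card_pow_mul_re (k : ℕ) (z : ℂ) : (((Fintype.card F : ℂ) ^ k * z).re : ℂ) =
      (Fintype.card F : ℂ) ^ k * (z.re : ℂ) := by
    rw [← ofReal_natCast, ← ofReal_pow, re_ofReal_mul, ofReal_mul]
  refine ⟨?_, ?_, fun ha hmp h3 ↦ ?_, fun ha hmp h3 ↦ ?_, fun ha hmp h3 ↦ ?_, fun ha hmp h3 ↦ ?_⟩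
  · rintro rfl rfl
    exact PP_zero_of_charP hm hodd hg hχ3o h not_dvd
  · rintro rfl hmp
    exact PP_zero_of_natCast_ne_zero hm hodd hg hχ3o h (natCast_ne_zero hmp) not_dvd
  · subst hmp
    rw [PP_of_natCast_eq_zero hm hodd hg hχ3o h (CharP.cast_eq_zero F m) ha,
      charSum_of_mod_three_eq_one hχ3o hm hodd h3, mul_pow, mul_assoc, mul_assoc, mul_assoc,
      card_pow_mul_re, mul_assoc]
  · subst hmp
    rw [PP_of_natCast_eq_zero hm hodd hg hχ3o h (CharP.cast_eq_zero F m) ha,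
      charSum_of_mod_three_eq_two hχ3o hm hodd h3, mul_assoc, mul_assoc, mul_assoc,
      card_pow_mul_re, mul_assoc]
  · rw [PP_of_natCast_ne_zero hm hodd hg hχ3o h (natCast_ne_zero hmp) ha,
      charSum_of_mod_three_eq_one hχ3o hm hodd h3, pow_eq_self_of_mod_three_eq_one hχ3o h3,
      ← sub_mul]
  · have pow_three : χ3 ^ 3 = 1 := hχ3o ▸ pow_orderOf_eq_one χ3
    have inv_pow_three : χ3⁻¹ ^ 3 = 1 := by rw [inv_pow, pow_three, inv_one]
    have root_pow_three : (χ3⁻¹ (m : F) * χ3 a * χ3 g ^ h) ^ 3 = 1 := by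
      rw [mul_pow, mul_pow, mulChar_apply_pow_eq_one inv_pow_three (natCast_ne_zero hmp),
        mulChar_apply_pow_eq_one pow_three ha, pow_right_comm,
        mulChar_apply_pow_eq_one pow_three g.ne_zero, one_pow, one_mul, one_mul]
    rw [PP_of_natCast_ne_zero hm hodd hg hχ3o h (natCast_ne_zero hmp) ha,
      charSum_of_mod_three_eq_two hχ3o hm hodd h3, pow_eq_sq_of_mod_three_eq_two hχ3o h3,
      ← inv_pow, MulChar.pow_apply' _ two_ne_zero, MulChar.pow_apply' _ two_ne_zero, sub_mul,
      sub_re, sub_mul, sub_mul, sub_re, ← sq_re_of_pow_three_eq_one root_pow_three]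
    ring_nf

/-- The values of `P_m(a,3,h)` for a prime `m > 3`, `s = 3` and `q = p ≡ 1 (mod 3)`,
in terms of `π_3 = χ_3(2)·(a_3 + i·b_3·√3)`, `ζ = e^{2πi/3}` and `L_m`. -/
theorem stmt16 (p m h : ℕ) [Fact p.Prime] (hm : m.Prime) (hm3 : 3 < m)
    (hp : p % 3 = 1)
    (g : (ZMod p)ˣ) (hg : ∀ u : (ZMod p)ˣ, u ∈ Subgroup.zpowers g)
    (hh : h < 3)
    (ζ : ℂ) (hζ : ζ = Complex.exp (2 * Real.pi * Complex.I / 3))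
    (χ3 : MulChar (ZMod p) ℂ) (hχ3o : orderOf χ3 = 3) (hχ3g : χ3 (g : ZMod p) = ζ)
    (a3 b3 : ℤ) (hab : a3 ^ 2 + 3 * b3 ^ 2 = (p : ℤ))
    (ha3 : a3 ≡ -1 [ZMOD 3])
    (hb3 : ((3 * b3 : ℤ) : ZMod p) = (2 * (g : ZMod p) ^ ((p - 1) / 3) + 1) * (a3 : ZMod p))
    (π3 : ℂ) (hπ3 : π3 = χ3 (2 : ZMod p) * ((a3 : ℂ) + Complex.I * (b3 : ℂ) * (Real.sqrt 3 : ℂ)))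
    (a : ZMod p) :
    (a = 0 → m = p →
      (PP (ZMod p) (g : ZMod p) m 3 h a : ℂ) = (1 / 3) * ((p : ℂ) ^ (p - 2) - 1)) ∧
    (a = 0 → m ≠ p →
      (PP (ZMod p) (g : ZMod p) m 3 h a : ℂ) =
        (1 / (3 * (m : ℂ))) * ((p : ℂ) ^ (m - 1) - 1)) ∧
    (a ≠ 0 → m = p →
      (PP (ZMod p) (g : ZMod p) m 3 h a : ℂ) =
        (1 / (3 * (p : ℂ))) * ((p : ℂ) ^ (p - 1) +
          2 * (p : ℂ) ^ ((p - 1) / 3) *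
            ((π3 ^ ((p - 1) / 3) * χ3 a * ζ ^ (2 * h)).re : ℂ))) ∧
    (a ≠ 0 → m ≠ p → m % 3 = 1 →
      (PP (ZMod p) (g : ZMod p) m 3 h a : ℂ) =
        (1 / (3 * (m : ℂ))) * ((p : ℂ) ^ (m - 1) - 1 +
          2 * (((((p : ℂ) * π3) ^ ((m - 1) / 3) - χ3⁻¹ (m : ZMod p)) *
            χ3 a * ζ ^ (2 * h)).re : ℂ))) ∧
    (a ≠ 0 → m ≠ p → m % 3 = 2 →
      (PP (ZMod p) (g : ZMod p) m 3 h a : ℂ) =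
        (1 / (3 * (m : ℂ))) * ((p : ℂ) ^ (m - 1) - 1 +
          2 * ((((p : ℂ) ^ ((m - 2) / 3) * π3 ^ ((m + 1) / 3) * χ3 a * ζ ^ h -
            χ3⁻¹ (m : ZMod p)) * χ3 a * ζ ^ h).re : ℂ))) := by
  have p_ne_zero : (p : ℂ) ≠ 0 := Nat.cast_ne_zero.2 (Fact.out : p.Prime).ne_zero
  subst hζ hπ3
  obtain ⟨zero_eq, zero_ne, ne_eq, -, ne_one, ne_two⟩ :=
    stmt16_general p m h hm hm3 g hg χ3 hχ3o a
  rw [ZMod.card] at zero_eq zero_ne ne_eq ne_one ne_two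
  rw [apply_two_mul_eq_jacobiSum hg hχ3o hχ3g hab ha3 hb3, ← hχ3g]
  refine ⟨fun ha hmp ↦ ?_, zero_ne, fun ha hmp ↦ ne_eq ha hmp hp, ne_one, ne_two⟩
  rw [zero_eq ha hmp, div_mul_cancel_right₀ p_ne_zero, one_div]

end
end

section
/- Let e, n be positive integers with r = 2en and let s ≥ 1 be a divisor of p^e + 1. Then for every integer i, Σ_{x ∈ F_{q^t}^*} e_t(γ_t^i·x^s) = (−1)^{nt}·√(q^t) − 1 if i ≢ k_s (mod s), and Σ_{x ∈ F_{q^t}^*} e_t(γ_t^i·x^s) = (−1)^{nt−1}·(s−1)·√(q^t) − 1 if i ≡ k_s (mod s), where k_s = s/2 if p > 2, nt is odd and (p^e+1)/s is odd, and k_s = 0 otherwise. -/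
noncomputable section

open Complex Polynomial Classical

/-- The canonical additive character `x ↦ exp(2πi·tr(x)/p)` of a finite field `E`
of characteristic `p` (the prime field being `ZMod p`). -/
def eChar (p : ℕ) (E : Type*) [Field E] [Fintype E] [Algebra (ZMod p) E] (x : E) : ℂ :=
  Complex.exp (2 * Real.pi * Complex.I * ((Algebra.trace (ZMod p) E x).val : ℂ) / (p : ℂ))

/-!
Write `Q = p ^ e`, so that `|E| = Q ^ (2m)` with `m = nt`, let `ψ` be the canonical character, let
`c = |Eˣ| / (Q + 1)`, and for `b ∈ Eˣ` put `S b = ∑ x, ψ (b * x ^ (Q + 1))`. Polarizing the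
Hermitian form `b * x ^ (Q + 1)`, and using that `ψ (b * x ^ (Q + 1)) = 1` for `x` in its radical,
shows that `S b * S (-b)` is `|E|` times the size of the radical; moreover `S (-b) = S b`, because
`-1` is a `(Q + 1)`-th power. The nonzero elements of the radical solve a pure power equation, so
their number is read off the cyclic group `Eˣ`, and `S b` is determined up to sign. The sign follows
from `S b ≡ 1` modulo `Q + 1` in the algebraic integers, because all nonempty fibres of
`x ↦ x ^ (Q + 1)` on `Eˣ` have `Q + 1` elements. Hence `S b` is `(-Q) ^ (m + 1)` if
`b ^ c = (-1) ^ m`, and `(-Q) ^ m` otherwise.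

When `s * d = Q + 1`, substituting `x ↦ y * x ^ d` and averaging over `y` expresses the sum over
`Eˣ` with exponent `s` and coefficient `b` as the mean over `y ∈ Eˣ` of the sums with exponent
`Q + 1` and coefficients `b * y ^ s`.
-/

section CyclicGroup

variable {G : Type*} [CommGroup G] [Fintype G]

lemma exists_pow_eq_iff_pow_eq_one [IsCyclic G] {d k : ℕ} (h : Fintype.card G = d * k) (g : G) :
    (∃ u : G, u ^ d = g) ↔ g ^ k = 1 := by
  have hpos : 0 < d * k := h ▸ Fintype.card_pos
  have hrange_le : (powMonoidHom d : G →* G).range ≤ (powMonoidHom k : G →* G).ker := by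
    rintro _ ⟨u, rfl⟩
    simp only [MonoidHom.mem_ker, powMonoidHom_apply, ← pow_mul, ← h, pow_card_eq_one]
  have hcard : Nat.card (powMonoidHom k : G →* G).ker =
      Nat.card (powMonoidHom d : G →* G).range := by
    rw [IsCyclic.card_powMonoidHom_ker, IsCyclic.card_powMonoidHom_range,
      Nat.card_eq_fintype_card, h, Nat.gcd_mul_left_left, Nat.gcd_mul_right_left,
      Nat.mul_div_cancel_left k (Nat.pos_of_mul_pos_right hpos)]
  have hrange := Subgroup.eq_of_le_of_card_ge hrange_le hcard.le
  exact SetLike.ext_iff.mp hrange g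

lemma card_filter_pow_eq [IsCyclic G] [DecidableEq G] {d k : ℕ} (h : Fintype.card G = d * k)
    (g : G) : (Finset.univ.filter fun u : G => u ^ d = g).card = if g ^ k = 1 then d else 0 := by
  split_ifs with hg
  · have hfiber := MonoidHom.card_fiber_eq_of_mem_range (powMonoidHom d : G →* G)
      ((exists_pow_eq_iff_pow_eq_one h g).mpr hg) ⟨1, one_pow d⟩
    have hker : Nat.card (powMonoidHom d : G →* G).ker = d := by
      rw [IsCyclic.card_powMonoidHom_ker, Nat.card_eq_fintype_card, h, Nat.gcd_mul_right_left]
    simp only [powMonoidHom_apply] at hfiber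
    rw [hfiber, ← Fintype.card_subtype, ← Nat.card_eq_fintype_card]
    exact hker
  · refine Finset.card_eq_zero.mpr (Finset.filter_eq_empty_iff.mpr fun u _ hu => hg ?_)
    exact (exists_pow_eq_iff_pow_eq_one h g).mp ⟨u, hu⟩

lemma sum_comp_pow [IsCyclic G] [DecidableEq G] {R : Type*} [Semiring R] {d k : ℕ}
    (h : Fintype.card G = d * k) (F : G → R) :
    ∑ x : G, F (x ^ d) = d * ∑ y : G with y ^ k = 1, F y := by
  rw [← Finset.sum_fiberwise' Finset.univ (· ^ d) F, Finset.mul_sum, Finset.sum_filter]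
  refine Finset.sum_congr rfl fun y _ => ?_
  rw [Finset.sum_const, card_filter_pow_eq h]
  split_ifs <;> simp

lemma sum_sum_pow_mul_pow {R : Type*} [Semiring R] (s d : ℕ) (F : G → R) :
    ∑ y : G, ∑ x : G, F (y ^ s * x ^ (s * d)) = Fintype.card G * ∑ x : G, F (x ^ s) := by
  have htranslate (x : G) : ∑ y : G, F (y ^ s * x ^ (s * d)) = ∑ y : G, F (y ^ s) := by
    rw [← Equiv.sum_comp (Equiv.mulRight (x ^ d)) fun y => F (y ^ s)]
    simp only [Equiv.coe_mulRight, mul_pow, ← pow_mul, mul_comm d s]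
  rw [Finset.sum_comm]
  simp only [htranslate, Finset.sum_const, Finset.card_univ, nsmul_eq_mul]

end CyclicGroup

lemma sum_range_eq_zero_of_antiperiodic {A : Type*} [AddCommGroup A] {f : ℕ → A} {e : ℕ}
    (hf : Function.Antiperiodic f e) (m : ℕ) : ∑ i ∈ Finset.range (m * (2 * e)), f i = 0 := by
  induction m with
  | zero => simp
  | succ m ih =>
    have hperiod (i : ℕ) : f (m * (2 * e) + i) = f i := by
      rw [add_comm]
      exact hf.nat_even_mul_periodic m i
    have hanti (i : ℕ) : f (e + i) = -f i := by rw [add_comm, hf]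
    rw [Nat.succ_mul, Finset.sum_range_add, ih, zero_add]
    simp only [hperiod]
    simp only [two_mul, Finset.sum_range_add, hanti, Finset.sum_neg_distrib, add_neg_cancel]

lemma trace_eq_zero_of_pow_eq_neg {K L : Type*} [Field K] [Field L] [Finite L] [Algebra K L]
    {e m : ℕ} (hfinrank : Module.finrank K L = m * (2 * e)) {z : L}
    (hz : z ^ Nat.card K ^ e = -z) : Algebra.trace K L z = 0 := by
  have : Finite K := Finite.of_injective _ (algebraMap K L).injective
  have hfrob (i : ℕ) : (-z) ^ Nat.card K ^ i = -z ^ Nat.card K ^ i := by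
    have := Fintype.ofFinite K
    have hmap := map_neg (FiniteField.frobeniusAlgEquivOfAlgebraic K L ^ i) z
    rwa [AlgEquiv.coe_pow, FiniteField.coe_frobeniusAlgEquivOfAlgebraic_iterate,
      Fintype.card_eq_nat_card] at hmap
  apply (algebraMap K L).injective
  rw [map_zero, FiniteField.algebraMap_trace_eq_sum_pow, hfinrank]
  refine sum_range_eq_zero_of_antiperiodic (fun i => ?_) m
  rw [add_comm, pow_add, pow_mul, hz, hfrob]

/-- The canonical additive character of an extension `E` of the prime field, as a bundled
`AddChar` so that orthogonality and primitivity of characters apply; its values are those of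
`eChar`. -/
def traceChar (p : ℕ) [NeZero p] (E : Type*) [Field E] [Algebra (ZMod p) E] : AddChar E ℂ :=
  ZMod.stdAddChar.compAddMonoidHom (Algebra.trace (ZMod p) E).toAddMonoidHom

section TraceChar

variable {p : ℕ} [Fact p.Prime] {E : Type*} [Field E] [Algebra (ZMod p) E]

lemma traceChar_apply (x : E) :
    traceChar p E x = ZMod.stdAddChar (Algebra.trace (ZMod p) E x) := rfl

lemma traceChar_eq_eChar [Fintype E] (x : E) : traceChar p E x = eChar p E x := by
  simpa [traceChar_apply, eChar] using
    ZMod.stdAddChar_coe (N := p) (Algebra.trace (ZMod p) E x).val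

lemma isPrimitive_traceChar [Finite E] : (traceChar p E).IsPrimitive := by
  refine AddChar.IsPrimitive.of_ne_one (AddChar.ne_one_iff.mpr ?_)
  obtain ⟨x, hx⟩ := Algebra.trace_surjective (ZMod p) E 1
  refine ⟨x, fun h => one_ne_zero (ZMod.injective_stdAddChar (N := p) ?_)⟩
  rw [← hx, ← traceChar_apply, h, AddChar.map_zero_eq_one]

lemma traceChar_pow_char_pow [Finite E] (e : ℕ) (z : E) :
    traceChar p E (z ^ p ^ e) = traceChar p E z := by
  induction e with
  | zero => simp
  | succ e ih =>
    have htrace := Algebra.trace_eq_of_algEquiv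
      (FiniteField.frobeniusAlgEquivOfAlgebraic (ZMod p) E) (z ^ p ^ e)
    rw [FiniteField.coe_frobeniusAlgEquivOfAlgebraic, ZMod.card] at htrace
    rw [pow_succ, pow_mul, ← ih, traceChar_apply, traceChar_apply, htrace]

lemma traceChar_eq_one_of_pow_eq_neg [Fintype E] {e m : ℕ}
    (hE : Fintype.card E = (p ^ e) ^ (2 * m)) {z : E} (hz : z ^ p ^ e = -z) :
    traceChar p E z = 1 := by
  have hfinrank : Module.finrank (ZMod p) E = m * (2 * e) := by
    have hcard := Module.card_eq_pow_finrank (K := ZMod p) (V := E)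
    rw [ZMod.card, hE, ← pow_mul] at hcard
    rw [← Nat.pow_right_injective (Fact.out : p.Prime).two_le hcard]
    ring
  rw [traceChar_apply, trace_eq_zero_of_pow_eq_neg hfinrank (by rwa [Nat.card_zmod]),
    AddChar.map_zero_eq_one]

end TraceChar

section SignFromCongruence

lemma neg_pow_modEq_one (Q : ℤ) (l : ℕ) : (-Q) ^ l ≡ 1 [ZMOD Q + 1] := by
  have hbase : -Q ≡ 1 [ZMOD Q + 1] := Int.modEq_iff_dvd.mpr ⟨1, by ring⟩
  simpa only [one_pow] using hbase.pow l

lemma isIntegral_addChar_apply {A R : Type*} [AddGroup A] [Finite A] [CommRing R]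
    (ψ : AddChar A R) (a : A) : IsIntegral ℤ (ψ a) := by
  refine IsIntegral.of_pow (n := Nat.card A) Nat.card_pos ?_
  rw [← AddChar.map_nsmul_eq_pow, card_nsmul_eq_zero', AddChar.map_zero_eq_one]
  exact isIntegral_one

lemma eq_intCast_of_sq_eq_sq_of_modEq_one {N a : ℤ} (hN : 2 < N) (ha : a ≡ 1 [ZMOD N]) {S T : ℂ}
    (hsq : S ^ 2 = (a : ℂ) ^ 2) (hST : S = 1 + N * T) (hT : IsIntegral ℤ T) : S = a := by
  refine (sq_eq_sq_iff_eq_or_eq_neg.mp hsq).resolve_right fun hneg => ?_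
  have hN0 : (N : ℂ) ≠ 0 := by exact_mod_cast (by omega : N ≠ 0)
  have hTrat : T = ((-a - 1) / N : ℚ) := by
    push_cast
    rw [eq_div_iff hN0]
    linear_combination hneg - hST
  obtain ⟨k, rfl⟩ := hT.exists_int_iff_exists_rat.mp ⟨_, hTrat⟩
  have hk : -a = 1 + N * k := by
    rw [hneg] at hST
    exact_mod_cast hST
  have hdvd : N ∣ 2 := by
    obtain ⟨j, hj⟩ := ha.dvd
    exact ⟨j - k, by linear_combination hj - hk⟩
  exact absurd (Int.le_of_dvd two_pos hdvd) (by omega)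

end SignFromCongruence

section UnitSums

lemma sum_eq_apply_zero_add_sum_units {K A : Type*} [GroupWithZero K] [Fintype K]
    [AddCommMonoid A] (F : K → A) : ∑ x : K, F x = F 0 + ∑ u : Kˣ, F u := by
  rw [Fintype.sum_eq_add_sum_subtype_ne F 0]
  congr 1
  exact (Equiv.sum_comp unitsEquivNeZero fun x : {x : K // x ≠ 0} => F x).symm

lemma sum_addChar_mul_pow_eq_one_add {K R : Type*} [Field K] [Fintype K] [CommRing R]
    (ψ : AddChar K R) (b : K) {s : ℕ} (hs : s ≠ 0) :
    ∑ x : K, ψ (b * x ^ s) = 1 + ∑ u : Kˣ, ψ (b * (u : K) ^ s) := by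
  rw [sum_eq_apply_zero_add_sum_units, zero_pow hs, mul_zero, AddChar.map_zero_eq_one]

lemma sum_neg_mul_pow_eq_sum_mul_pow {K A : Type*} [Field K] [Fintype K] [AddCommMonoid A]
    {N : ℕ} {w : Kˣ} (hw : w ^ N = -1) (F : K → A) (b : K) :
    ∑ x : K, F (-b * x ^ N) = ∑ x : K, F (b * x ^ N) := by
  have hwK : (w : K) ^ N = -1 := by
    simpa only [Units.val_pow_eq_pow_val, Units.val_neg, Units.val_one] using
      congrArg Units.val hw
  rw [← Equiv.sum_comp w.mulLeft fun x => F (b * x ^ N)]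
  simp only [Units.mulLeft_apply, mul_pow, hwK, neg_mul, one_mul, mul_neg]

end UnitSums

section HermitianForm

variable {p : ℕ} [Fact p.Prime] {e : ℕ}

-- Here `b ^ Q * x ^ (Q * Q) + b * x`, with `Q = p ^ e`, is the additive polynomial whose zeros
-- form the radical of the Hermitian form `b * x ^ (Q + 1)`.
lemma addChar_mul_add_pow_mul_addChar_neg {A R : Type*} [CommRing A] [CharP A p] [CommRing R]
    {ψ : AddChar A R} (hψ : ∀ z, ψ (z ^ p ^ e) = ψ z) (b x y : A) :
    ψ (b * (x + y) ^ (p ^ e + 1)) * ψ (-b * y ^ (p ^ e + 1)) =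
      ψ (b * x ^ (p ^ e + 1)) *
        ψ (y ^ p ^ e * (b ^ p ^ e * x ^ (p ^ e * p ^ e) + b * x)) := by
  have hexpand : ψ (y ^ p ^ e * (b ^ p ^ e * x ^ (p ^ e * p ^ e) + b * x)) =
      ψ (b * x ^ p ^ e * y) * ψ (b * x * y ^ p ^ e) := by
    rw [← hψ (b * x ^ p ^ e * y), ← AddChar.map_add_eq_mul, mul_pow, mul_pow, ← pow_mul]
    ring_nf
  rw [hexpand, ← AddChar.map_add_eq_mul, ← AddChar.map_add_eq_mul, ← AddChar.map_add_eq_mul,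
    pow_succ (x + y), add_pow_char_pow]
  ring_nf

variable {E R : Type*} [Field E] [Fintype E] [CharP E p] [CommRing R] [IsDomain R]

theorem sum_addChar_mul_sum_addChar_neg {ψ : AddChar E R} (hprim : ψ.IsPrimitive)
    (hψ : ∀ z, ψ (z ^ p ^ e) = ψ z) (b : E) :
    (∑ x : E, ψ (b * x ^ (p ^ e + 1))) * ∑ y : E, ψ (-b * y ^ (p ^ e + 1)) =
      Fintype.card E * ∑ x : E with b ^ p ^ e * x ^ (p ^ e * p ^ e) + b * x = 0,
        ψ (b * x ^ (p ^ e + 1)) := by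
  have hinner (x : E) :
      ∑ y : E, ψ (b * (x + y) ^ (p ^ e + 1)) * ψ (-b * y ^ (p ^ e + 1)) =
        if b ^ p ^ e * x ^ (p ^ e * p ^ e) + b * x = 0 then
          Fintype.card E * ψ (b * x ^ (p ^ e + 1)) else 0 := by
    have hbij : Function.Bijective fun y : E => y ^ p ^ e := bijective_iterateFrobenius E p e
    simp only [addChar_mul_add_pow_mul_addChar_neg hψ]
    rw [← Finset.mul_sum,
      hbij.sum_comp fun y => ψ (y * (b ^ p ^ e * x ^ (p ^ e * p ^ e) + b * x)),
      AddChar.sum_mulShift _ hprim]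
    split_ifs
    · rw [mul_comm]
    · rw [Nat.cast_zero, mul_zero]
  calc (∑ x : E, ψ (b * x ^ (p ^ e + 1))) * ∑ y : E, ψ (-b * y ^ (p ^ e + 1))
      = ∑ y : E, ∑ x : E, ψ (b * (x + y) ^ (p ^ e + 1)) * ψ (-b * y ^ (p ^ e + 1)) := by
        rw [Finset.mul_sum]
        refine Finset.sum_congr rfl fun y _ => ?_
        rw [← Finset.sum_mul, ← Equiv.sum_comp (Equiv.addRight y) fun x => ψ (b * x ^ (p ^ e + 1))]
        rfl
    _ = _ := by
        rw [Finset.sum_comm]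
        simp only [hinner, ← Finset.sum_filter, ← Finset.mul_sum]

end HermitianForm

section KernelCount

open scoped Finset

lemma neg_one_units_pow_char_pow {R : Type*} [Ring R] {p : ℕ} [Fact p.Prime] [CharP R p] (e : ℕ) :
    (-1 : Rˣ) ^ p ^ e = -1 := by
  ext
  simp only [Units.val_pow_eq_pow_val, Units.val_neg, Units.val_one, neg_one_pow_char_pow R p]

lemma neg_one_pow_geom_sum {R : Type*} [Monoid R] [HasDistribNeg R] {q : ℕ}
    (hq : (-1 : R) ^ q = -1) (m : ℕ) : (-1 : R) ^ (∑ j ∈ Finset.range m, q ^ j) = (-1) ^ m := by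
  induction m with
  | zero => simp
  | succ m ih => rw [geom_sum_succ, pow_succ, pow_mul, hq, ih, pow_succ]

lemma one_lt_of_card_eq_pow {K : Type*} [Fintype K] [Nontrivial K] {Q l : ℕ}
    (hK : Fintype.card K = Q ^ l) : 1 < Q := by
  by_contra! hQ
  exact Fintype.one_lt_card.not_ge (hK.trans_le (pow_le_one₀ Q.zero_le hQ))

lemma card_units_eq_mul_geom_sum {K : Type*} [Field K] [Fintype K] {n m : ℕ}
    (hK : Fintype.card K = (n + 1) ^ (2 * m)) :
    Fintype.card Kˣ = (n + 2) * n * ∑ j ∈ Finset.range m, ((n + 1) ^ 2) ^ j := by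
  have hgeom := geom_sum_mul_add ((n + 2) * n) m
  rw [show (n + 2) * n + 1 = (n + 1) ^ 2 by ring, ← pow_mul, ← hK] at hgeom
  rw [Fintype.card_units, ← hgeom, Nat.add_sub_cancel, mul_comm]

lemma add_one_dvd_card_units {K : Type*} [Field K] [Fintype K] {Q m : ℕ}
    (hK : Fintype.card K = Q ^ (2 * m)) : Q + 1 ∣ Fintype.card Kˣ := by
  obtain ⟨n, rfl⟩ := Nat.exists_eq_succ_of_ne_zero (one_lt_of_card_eq_pow hK).ne_bot
  rw [card_units_eq_mul_geom_sum hK, mul_assoc]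
  exact dvd_mul_right _ _

lemma pow_mul_pow_sq_add_mul_eq_zero_iff {K : Type*} [Field K] (b u : Kˣ) (n : ℕ) :
    (b : K) ^ (n + 1) * (u : K) ^ ((n + 1) * (n + 1)) + b * u = 0 ↔
      u ^ ((n + 2) * n) = -(b ^ n)⁻¹ := by
  have hfactor : (b : K) ^ (n + 1) * (u : K) ^ ((n + 1) * (n + 1)) + b * u =
      (b * u : Kˣ) * ((u ^ ((n + 2) * n) * b ^ n : Kˣ) + 1) := by
    push_cast
    ring
  rw [hfactor, Units.mul_right_eq_zero, add_eq_zero_iff_eq_neg, ← Units.val_one, ← Units.val_neg,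
    Units.val_inj, ← eq_mul_inv_iff_mul_eq, neg_one_mul]

lemma exists_pow_add_one_eq_neg_one {K : Type*} [Field K] [Fintype K] {Q m : ℕ}
    (hK : Fintype.card K = Q ^ (2 * m)) (hQ : (-1 : Kˣ) ^ Q = -1) :
    ∃ w : Kˣ, w ^ (Q + 1) = -1 := by
  obtain ⟨n, rfl⟩ := Nat.exists_eq_succ_of_ne_zero (one_lt_of_card_eq_pow hK).ne_bot
  have hn : (-1 : Kˣ) ^ n = 1 := by simpa [pow_succ] using hQ
  refine (exists_pow_eq_iff_pow_eq_one
    ((card_units_eq_mul_geom_sum hK).trans (mul_assoc _ _ _)) (-1)).mpr ?_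
  rw [pow_mul, hn, one_pow]

theorem card_filter_pow_mul_pow_sq_add_mul_eq_zero {K : Type*} [Field K] [Fintype K]
    {Q m c : ℕ} (hK : Fintype.card K = Q ^ (2 * m)) (hQ : (-1 : Kˣ) ^ Q = -1)
    (hc : Fintype.card Kˣ = (Q + 1) * c) (b : Kˣ) :
    #{x : K | (b : K) ^ Q * x ^ (Q * Q) + b * x = 0} =
      if b ^ c = (-1) ^ m then Q ^ 2 else 1 := by
  obtain ⟨n, rfl⟩ := Nat.exists_eq_succ_of_ne_zero (one_lt_of_card_eq_pow hK).ne_bot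
  simp only [Nat.succ_eq_add_one] at *
  set k := ∑ j ∈ Finset.range m, ((n + 1) ^ 2) ^ j
  have hcard : Fintype.card Kˣ = (n + 2) * n * k := card_units_eq_mul_geom_sum hK
  have hcn : c = n * k := by
    refine Nat.eq_of_mul_eq_mul_left (Nat.succ_pos (n + 1)) ?_
    rw [← mul_assoc, ← hcard, hc]
  have hunits : #{u : Kˣ | (b : K) ^ (n + 1) * (u : K) ^ ((n + 1) * (n + 1)) + b * u = 0} =
      if b ^ c = (-1) ^ m then (n + 2) * n else 0 := by
    have hcond : (-(b ^ n)⁻¹) ^ k = 1 ↔ b ^ c = (-1) ^ m := by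
      have hsign : (-1 : Kˣ) ^ k = (-1) ^ m :=
        neg_one_pow_geom_sum (by rw [sq, pow_mul, hQ, hQ]) m
      rw [neg_eq_neg_one_mul, mul_pow, hsign, inv_pow, ← pow_mul, ← hcn, mul_inv_eq_one, eq_comm]
    simp only [pow_mul_pow_sq_add_mul_eq_zero_iff, card_filter_pow_eq hcard, hcond]
  rw [Finset.card_filter] at hunits ⊢
  rw [sum_eq_apply_zero_add_sum_units, hunits, if_pos (by simp)]
  split_ifs <;> ring

end KernelCount

section SemiprimitiveSums

variable {p : ℕ} [Fact p.Prime] {E : Type*} [Field E] [Fintype E] [Algebra (ZMod p) E]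
  {e m : ℕ}

lemma sq_sum_traceChar_mul_pow_add_one (hE : Fintype.card E = (p ^ e) ^ (2 * m)) {c : ℕ}
    (hc : Fintype.card Eˣ = (p ^ e + 1) * c) (b : Eˣ) :
    (∑ x : E, traceChar p E (b * x ^ (p ^ e + 1))) ^ 2 =
      ((-(p ^ e : ℂ)) ^ (if b ^ c = (-1) ^ m then m + 1 else m)) ^ 2 := by
  have := charP_of_injective_algebraMap (algebraMap (ZMod p) E).injective p
  have hneg : (-1 : Eˣ) ^ p ^ e = -1 := neg_one_units_pow_char_pow e
  obtain ⟨w, hw⟩ := exists_pow_add_one_eq_neg_one hE hneg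
  have hradical : ∀ x ∈ Finset.univ.filter fun x : E =>
      (b : E) ^ p ^ e * x ^ (p ^ e * p ^ e) + b * x = 0,
      traceChar p E (b * x ^ (p ^ e + 1)) = 1 := by
    intro x hx
    refine traceChar_eq_one_of_pow_eq_neg hE ?_
    have hx' := eq_neg_of_add_eq_zero_left (Finset.mem_filter.mp hx).2
    rw [mul_pow, ← pow_mul, add_mul, pow_add, one_mul, ← mul_assoc, hx']
    ring
  have hprod := sum_addChar_mul_sum_addChar_neg isPrimitive_traceChar
    (traceChar_pow_char_pow e) (b : E)
  rw [sum_neg_mul_pow_eq_sum_mul_pow hw, ← sq, Finset.sum_congr rfl hradical, Finset.sum_const,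
    nsmul_one, card_filter_pow_mul_pow_sq_add_mul_eq_zero hE hneg hc, hE] at hprod
  rw [hprod, ← pow_mul (-_), mul_comm _ 2, pow_mul (-_), neg_sq]
  split_ifs <;> push_cast <;> ring

theorem sum_traceChar_mul_pow_add_one (hE : Fintype.card E = (p ^ e) ^ (2 * m)) {c : ℕ}
    (hc : Fintype.card Eˣ = (p ^ e + 1) * c) (b : Eˣ) :
    ∑ x : E, traceChar p E (b * x ^ (p ^ e + 1)) =
      (-(p ^ e : ℂ)) ^ (if b ^ c = (-1) ^ m then m + 1 else m) := by
  have hQ : 1 < p ^ e := one_lt_of_card_eq_pow hE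
  have hcongr := sum_addChar_mul_pow_eq_one_add (traceChar p E) (b : E) (p ^ e).succ_ne_zero
  have hmultiple := sum_comp_pow hc fun u : Eˣ => traceChar p E (b * u)
  simp only [Units.val_pow_eq_pow_val] at hmultiple
  rw [Nat.succ_eq_add_one, hmultiple] at hcongr
  have heval := eq_intCast_of_sq_eq_sq_of_modEq_one (by exact_mod_cast Nat.succ_lt_succ hQ)
    (neg_pow_modEq_one (p ^ e) (if b ^ c = (-1) ^ m then m + 1 else m))
    (by exact_mod_cast sq_sum_traceChar_mul_pow_add_one hE hc b) (by exact_mod_cast hcongr)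
    (IsIntegral.sum _ fun u _ => isIntegral_addChar_apply _ _)
  exact_mod_cast heval

lemma sum_units_traceChar_mul_pow_add_one (hE : Fintype.card E = (p ^ e) ^ (2 * m)) {c : ℕ}
    (hc : Fintype.card Eˣ = (p ^ e + 1) * c) (b : Eˣ) :
    ∑ x : Eˣ, traceChar p E (b * (x : E) ^ (p ^ e + 1)) =
      (-(p ^ e : ℂ)) ^ m * (1 - if b ^ c = (-1) ^ m then (p ^ e + 1 : ℂ) else 0) - 1 := by
  rw [← sub_eq_iff_eq_add'.mpr (sum_addChar_mul_pow_eq_one_add (traceChar p E) (b : E)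
    (p ^ e).succ_ne_zero), sum_traceChar_mul_pow_add_one hE hc]
  split_ifs <;> ring

theorem sum_units_traceChar_mul_pow (hE : Fintype.card E = (p ^ e) ^ (2 * m)) {s d c : ℕ}
    (hsd : s * d = p ^ e + 1) (hc : Fintype.card Eˣ = s * d * c) (b : Eˣ) :
    ∑ x : Eˣ, traceChar p E (b * (x : E) ^ s) =
      (-(p ^ e : ℂ)) ^ m * (1 - if b ^ (d * c) = (-1) ^ (m * d) then (s : ℂ) else 0) - 1 := by
  have hcard : Fintype.card Eˣ = s * c * d := by rw [hc]; ring
  have hcond (y : Eˣ) : (b * y ^ s) ^ c = (-1) ^ m ↔ y ^ (s * c) = (-1) ^ m * (b ^ c)⁻¹ := by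
    rw [mul_pow, ← pow_mul, eq_mul_inv_iff_mul_eq, mul_comm]
  have hroot : ((-1 : Eˣ) ^ m * (b ^ c)⁻¹) ^ d = 1 ↔ b ^ (d * c) = (-1) ^ (m * d) := by
    rw [mul_pow, inv_pow, ← pow_mul, ← pow_mul, mul_inv_eq_one, eq_comm, mul_comm c]
  have hinner (y : Eˣ) : ∑ x : Eˣ, traceChar p E (b * (y ^ s * x ^ (s * d) : Eˣ)) =
      (-(p ^ e : ℂ)) ^ m *
        (1 - if y ^ (s * c) = (-1) ^ m * (b ^ c)⁻¹ then (s * d : ℂ) else 0) - 1 := by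
    have hsdC : (s * d : ℂ) = p ^ e + 1 := by exact_mod_cast hsd
    simp only [← hcond, hsdC, ← sum_units_traceChar_mul_pow_add_one hE (hsd ▸ hc) (b * y ^ s),
      Units.val_mul, Units.val_pow_eq_pow_val, mul_assoc, hsd]
  have haverage := sum_sum_pow_mul_pow s d fun u : Eˣ => traceChar p E (b * u)
  have hM : (Fintype.card Eˣ : ℂ) ≠ 0 := Nat.cast_ne_zero.mpr Fintype.card_ne_zero
  refine mul_left_cancel₀ hM ?_
  simp only [hinner, Units.val_pow_eq_pow_val] at haverage
  rw [← haverage, Finset.sum_sub_distrib, ← Finset.mul_sum, Finset.sum_sub_distrib,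
    ← Finset.sum_filter, Finset.sum_const, Finset.sum_const, Finset.card_univ,
    card_filter_pow_eq hcard, hc]
  simp only [hroot]
  split_ifs <;> push_cast [nsmul_eq_mul] <;> ring

end SemiprimitiveSums

section Generator

lemma zpow_pow_eq_pow_pow_iff_modEq {G : Type*} [Group G] [Fintype G] {γ : G}
    (hγ : ∀ u, u ∈ Subgroup.zpowers γ) {s k : ℕ} (h : Fintype.card G = s * k)
    (i : ℤ) (j : ℕ) : (γ ^ i) ^ k = (γ ^ j) ^ k ↔ i ≡ j [ZMOD s] := by
  have hk : 0 < k := Nat.pos_of_mul_pos_left (h ▸ Fintype.card_pos)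
  rw [← zpow_natCast, ← zpow_natCast, ← zpow_natCast, ← zpow_mul, ← zpow_mul,
    zpow_eq_zpow_iff_modEq, orderOf_eq_card_of_forall_mem_zpowers hγ, Nat.card_eq_fintype_card, h,
    Nat.cast_mul, Int.modEq_iff_dvd, Int.modEq_iff_dvd, ← sub_mul]
  exact Int.mul_dvd_mul_iff_right (by exact_mod_cast hk.ne')

lemma pow_half_card_eq_neg_one {K : Type*} [Field K] [Fintype K] {γ : Kˣ}
    (hγ : ∀ u, u ∈ Subgroup.zpowers γ) {k : ℕ} (h : Fintype.card Kˣ = k * 2) : γ ^ k = -1 := by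
  have hroot : IsPrimitiveRoot (γ ^ k) 2 := by
    refine (IsPrimitiveRoot.orderOf γ).pow (orderOf_pos γ) ?_
    rw [orderOf_eq_card_of_forall_mem_zpowers hγ, Nat.card_eq_fintype_card, h]
  refine Units.ext ?_
  rw [Units.val_neg, Units.val_one]
  exact (IsPrimitiveRoot.coe_units_iff.mpr hroot).eq_neg_one_of_two_right

lemma generator_pow_eq_neg_one_pow {p : ℕ} [Fact p.Prime] {K : Type*} [Field K] [Fintype K]
    [CharP K p] {γ : Kˣ} (hγ : ∀ u, u ∈ Subgroup.zpowers γ) {e s d c : ℕ}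
    (hsd : s * d = p ^ e + 1) (hc : Fintype.card Kˣ = s * d * c) (m : ℕ) :
    (γ ^ (if 2 < p ∧ Odd m ∧ Odd d then s / 2 else 0)) ^ (d * c) = (-1) ^ (m * d) := by
  split_ifs with h
  · obtain ⟨hp, hm, hd⟩ := h
    have hs : Even s := by
      have hpodd : Odd p := (Fact.out : p.Prime).odd_of_ne_two hp.ne'
      have heven : Even (s * d) := hsd ▸ hpodd.pow.add_one
      exact (Nat.even_mul.mp heven).resolve_right (Nat.not_even_iff_odd.mpr hd)
    rw [(hm.mul hd).neg_one_pow, ← pow_mul]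
    refine pow_half_card_eq_neg_one hγ ?_
    obtain ⟨s', rfl⟩ := hs.two_dvd
    rw [hc, Nat.mul_div_cancel_left s' two_pos]
    ring
  · rw [pow_zero, one_pow]
    obtain rfl | hp := (Fact.out : p.Prime).two_le.eq_or_lt
    · have hneg : (-1 : Kˣ) = 1 := by
        ext
        simp only [Units.val_neg, Units.val_one, CharTwo.neg_eq]
      rw [hneg, one_pow]
    · have heven : Even (m * d) := by
        rw [← Nat.not_odd_iff_even, Nat.odd_mul]
        exact fun hodd => h ⟨hp, hodd⟩
      rw [heven.neg_one_pow]

end Generator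

/-- The semiprimitive-case evaluation of the monomial sums
`Σ_{x∈F_{q^t}^*} e_t(γ_t^i·x^s)` when `r = 2en` and `s ∣ p^e + 1`. -/
theorem stmt17 (p r t e n s : ℕ) [Fact p.Prime] (hr : 0 < r) (ht : 0 < t)
    (he : 0 < e) (hn : 0 < n) (hren : r = 2 * e * n)
    (hs : 1 ≤ s) (hsd : s ∣ p ^ e + 1)
    (E : Type*) [Field E] [Fintype E] [Algebra (ZMod p) E]
    (hE : Fintype.card E = (p ^ r) ^ t)
    (γ : Eˣ) (hγ : ∀ u : Eˣ, u ∈ Subgroup.zpowers γ)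
    (ks : ℕ)
    (hks : ks = if 2 < p ∧ Odd (n * t) ∧ Odd ((p ^ e + 1) / s) then s / 2 else 0) :
    ∀ i : ℤ,
      (¬ (i ≡ (ks : ℤ) [ZMOD (s : ℤ)]) →
        ∑ x : Eˣ, eChar p E (((γ ^ i : Eˣ) : E) * (x : E) ^ s) =
          (-1 : ℂ) ^ (n * t) * (Real.sqrt (((p : ℝ) ^ r) ^ t) : ℂ) - 1) ∧
      (i ≡ (ks : ℤ) [ZMOD (s : ℤ)] →
        ∑ x : Eˣ, eChar p E (((γ ^ i : Eˣ) : E) * (x : E) ^ s) =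
          (-1 : ℂ) ^ (n * t - 1) * ((s : ℂ) - 1) * (Real.sqrt (((p : ℝ) ^ r) ^ t) : ℂ) - 1) := by
  have := charP_of_injective_algebraMap (algebraMap (ZMod p) E).injective p
  intro i
  obtain ⟨d, hd⟩ := hsd
  have hdvd : (p ^ e + 1) / s = d := by rw [hd, Nat.mul_div_cancel_left d hs]
  have hcard : Fintype.card E = (p ^ e) ^ (2 * (n * t)) := by
    rw [hE, hren]
    ring
  obtain ⟨c, hc⟩ : s * d ∣ Fintype.card Eˣ := hd ▸ add_one_dvd_card_units hcard
  have hsqrt : √(((p : ℝ) ^ r) ^ t) = ((p : ℝ) ^ e) ^ (n * t) := by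
    rw [← Real.sqrt_sq (by positivity : 0 ≤ ((p : ℝ) ^ e) ^ (n * t)), hren]
    ring_nf
  have hcond : (γ ^ i) ^ (d * c) = (-1) ^ (n * t * d) ↔ i ≡ ks [ZMOD s] := by
    rw [← generator_pow_eq_neg_one_pow hγ hd.symm hc, ← hdvd, ← hks, hdvd]
    exact zpow_pow_eq_pow_pow_iff_modEq hγ (hc.trans (mul_assoc _ _ _)) i ks
  simp only [← traceChar_eq_eChar, sum_units_traceChar_mul_pow hcard hd.symm hc, hcond, hsqrt,
    neg_pow ((p : ℂ) ^ e) (n * t)]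
  push_cast
  refine ⟨fun hi => ?_, fun hi => ?_⟩
  · rw [if_neg hi, sub_zero, mul_one]
  · obtain ⟨k, hk⟩ := Nat.exists_eq_succ_of_ne_zero (Nat.mul_pos hn ht).ne'
    rw [if_pos hi, hk, Nat.succ_sub_one, pow_succ (-1 : ℂ)]
    ring

end
end
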